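/- arXiv:1410.7081 — 4 statements merged into one kernel-verified Lean document; each statement's English description precedes it below -/
import Mathlib

section
/- The derivative of the complete elliptic integral of the first kind satisfies dK/dk = (E(k) - (1-k^2)K(k)) / (k(1-k^2)) for 0 < k < 1. -/
open scoped Real
open MeasureTheory

noncomputable def EllK (k : ℝ) : ℝ :=
  ∫ x in (0:ℝ)..(1:ℝ), 1 / Real.sqrt ((1 - x^2) * (1 - k^2 * x^2))

noncomputable def EllE (k : ℝ) : ℝ :=
  ∫ x in (0:ℝ)..(1:ℝ), Real.sqrt ((1 - k^2 * x^2) / (1 - x^2))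

noncomputable def EllK' (k : ℝ) : ℝ := EllK (Real.sqrt (1 - k^2))

theorem one_sub_sq_mul_sq_pos {k x : ℝ} (hk : k ^ 2 < 1) (hx0 : 0 ≤ x) (hx1 : x ≤ 1) :
    0 < 1 - k ^ 2 * x ^ 2 := by
  have hx : x ^ 2 ≤ 1 := by nlinarith
  nlinarith [sq_nonneg k, sq_nonneg x, mul_le_mul_of_nonneg_left hx (sq_nonneg k)]

theorem intervalIntegrable_inv_sqrt_one_sub_sq :
    IntervalIntegrable (fun x : ℝ => (√(1 - x ^ 2))⁻¹) volume 0 1 := by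
  refine intervalIntegral.intervalIntegrable_deriv_of_nonneg (g := Real.arcsin)
    Real.continuous_arcsin.continuousOn (fun x hx => ?_) (fun x _ => by positivity)
  simp only [zero_le_one, min_eq_left, max_eq_right, Set.mem_Ioo] at hx
  simpa using Real.hasDerivAt_arcsin (x := x) (by linarith) (by linarith)

theorem continuousOn_sqrt_one_sub_inv_pow {k : ℝ} (hk : k ^ 2 < 1) (n : ℕ) :
    ContinuousOn (fun x : ℝ => (√(1 - k ^ 2 * x ^ 2))⁻¹ ^ n) (Set.uIcc 0 1) := by
  refine ContinuousOn.pow (ContinuousOn.inv₀ (by fun_prop) fun x hx => ?_) n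
  rw [Set.uIcc_of_le zero_le_one] at hx
  exact (Real.sqrt_pos.2 (one_sub_sq_mul_sq_pos hk hx.1 hx.2)).ne'

theorem EllK_eq_integral_mul (k : ℝ) :
    EllK k = ∫ x in (0:ℝ)..1, (√(1 - x ^ 2))⁻¹ * (√(1 - k ^ 2 * x ^ 2))⁻¹ := by
  refine intervalIntegral.integral_congr fun x hx => ?_
  rw [Set.uIcc_of_le zero_le_one] at hx
  have h : 0 ≤ 1 - x ^ 2 := by nlinarith [hx.1, hx.2]
  simp only [Real.sqrt_mul h, one_div, mul_inv]

theorem EllE_eq_integral_mul (k : ℝ) :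
    EllE k = ∫ x in (0:ℝ)..1, (√(1 - x ^ 2))⁻¹ * √(1 - k ^ 2 * x ^ 2) := by
  refine intervalIntegral.integral_congr fun x hx => ?_
  rw [Set.uIcc_of_le zero_le_one] at hx
  have h : 0 ≤ 1 - x ^ 2 := by nlinarith [hx.1, hx.2]
  simp only [Real.sqrt_div' _ h]
  ring

theorem hasDerivAt_inv_sqrt_one_sub_sq_mul_sq {k x : ℝ} (h : 0 < 1 - k ^ 2 * x ^ 2) :
    HasDerivAt (fun k : ℝ => (√(1 - k ^ 2 * x ^ 2))⁻¹)
      (k * x ^ 2 * (√(1 - k ^ 2 * x ^ 2))⁻¹ ^ 3) k := by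
  have hD := (Real.sqrt_pos.2 h).ne'
  have h1 : HasDerivAt (fun k : ℝ => 1 - k ^ 2 * x ^ 2) (-(2 * k * x ^ 2)) k := by
    simpa using ((hasDerivAt_pow 2 k).mul_const (x ^ 2)).const_sub 1
  refine ((h1.sqrt h.ne').fun_inv hD).congr_deriv ?_
  field_simp

/-- Differentiation under the integral sign for the complete elliptic integral `EllK`. -/
theorem hasDerivAt_EllK_integral {k : ℝ} (hk : 0 < k) (hk1 : k < 1) :
    HasDerivAt EllK (∫ x in (0:ℝ)..1,
      (√(1 - x ^ 2))⁻¹ * (k * x ^ 2 * (√(1 - k ^ 2 * x ^ 2))⁻¹ ^ 3)) k := by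
  obtain ⟨m, hkm, hm1⟩ := exists_between hk1
  have hm : m ^ 2 < 1 := by nlinarith
  have hk2 : k ^ 2 < 1 := by nlinarith
  rw [funext EllK_eq_integral_mul]
  refine (intervalIntegral.hasDerivAt_integral_of_dominated_loc_of_deriv_le
    (F := fun k x : ℝ => (√(1 - x ^ 2))⁻¹ * (√(1 - k ^ 2 * x ^ 2))⁻¹)
    (F' := fun k x : ℝ => (√(1 - x ^ 2))⁻¹ * (k * x ^ 2 * (√(1 - k ^ 2 * x ^ 2))⁻¹ ^ 3))
    (s := Set.Ioo 0 m) (bound := fun x => (√(1 - x ^ 2))⁻¹ * (√(1 - m ^ 2))⁻¹ ^ 3)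
    (Ioo_mem_nhds hk hkm) ?_ ?_ ?_ ?_ ?_ ?_).2
  · exact Filter.Eventually.of_forall fun k => (by fun_prop : Measurable _).aestronglyMeasurable
  · simpa using intervalIntegrable_inv_sqrt_one_sub_sq.mul_continuousOn
      (continuousOn_sqrt_one_sub_inv_pow hk2 1)
  · exact (by fun_prop : Measurable _).aestronglyMeasurable
  · refine Filter.Eventually.of_forall fun x hx a ha => ?_
    rw [Set.uIoc_of_le zero_le_one] at hx
    have hx2 : x ^ 2 ≤ 1 := by nlinarith [hx.1, hx.2]
    have ha2 : a ^ 2 ≤ m ^ 2 := pow_le_pow_left₀ ha.1.le ha.2.le 2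
    have hax : a * x ^ 2 ≤ 1 := by nlinarith [ha.1, ha.2, sq_nonneg x]
    have hmp : 0 < √(1 - m ^ 2) := Real.sqrt_pos.2 (by linarith)
    have hle : 1 - m ^ 2 ≤ 1 - a ^ 2 * x ^ 2 := by nlinarith [sq_nonneg a]
    have ha0 := ha.1
    rw [Real.norm_of_nonneg (by positivity)]
    calc _ ≤ (√(1 - x ^ 2))⁻¹ * (1 * (√(1 - m ^ 2))⁻¹ ^ 3) := by gcongr
      _ = _ := by rw [one_mul]
  · exact intervalIntegrable_inv_sqrt_one_sub_sq.mul_const _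
  · refine Filter.Eventually.of_forall fun x hx a ha => ?_
    rw [Set.uIoc_of_le zero_le_one] at hx
    exact (hasDerivAt_inv_sqrt_one_sub_sq_mul_sq
      (one_sub_sq_mul_sq_pos (by nlinarith [ha.1, ha.2]) hx.1.le hx.2)).const_mul _

theorem hasDerivAt_mul_sqrt_mul_inv_sqrt {k x : ℝ} (hx : 0 < 1 - x ^ 2)
    (hkx : 0 < 1 - k ^ 2 * x ^ 2) :
    HasDerivAt (fun x : ℝ => k ^ 2 * (x * √(1 - x ^ 2) * (√(1 - k ^ 2 * x ^ 2))⁻¹))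
      ((√(1 - x ^ 2))⁻¹ * √(1 - k ^ 2 * x ^ 2) -
        (1 - k ^ 2) * ((√(1 - x ^ 2))⁻¹ * (√(1 - k ^ 2 * x ^ 2))⁻¹ ^ 3)) x := by
  have hC := (Real.sqrt_pos.2 hx).ne'
  have hD := (Real.sqrt_pos.2 hkx).ne'
  have h1 : HasDerivAt (fun x : ℝ => 1 - x ^ 2) (-(2 * x)) x := by
    simpa using (hasDerivAt_pow 2 x).const_sub 1
  have h2 : HasDerivAt (fun x : ℝ => 1 - k ^ 2 * x ^ 2) (-(k ^ 2 * (2 * x))) x := by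
    simpa using ((hasDerivAt_pow 2 x).const_mul (k ^ 2)).const_sub 1
  refine ((((hasDerivAt_id' x).fun_mul (h1.sqrt hx.ne')).fun_mul
    ((h2.sqrt hkx.ne').fun_inv hD)).const_mul (k ^ 2)).congr_deriv ?_
  have eC := Real.sq_sqrt hx.le
  have eD := Real.sq_sqrt hkx.le
  set C := √(1 - x ^ 2)
  set D := √(1 - k ^ 2 * x ^ 2)
  have eD4 : D ^ 4 = (1 - k ^ 2 * x ^ 2) ^ 2 := by rw [← eD]; ring
  field_simp
  simp only [eC, eD, eD4]
  ring

theorem integral_mul_sqrt_sub_eq_zero {k : ℝ} (hk : k ^ 2 < 1) :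
    ∫ x in (0:ℝ)..1, ((√(1 - x ^ 2))⁻¹ * √(1 - k ^ 2 * x ^ 2) -
      (1 - k ^ 2) * ((√(1 - x ^ 2))⁻¹ * (√(1 - k ^ 2 * x ^ 2))⁻¹ ^ 3)) = 0 := by
  rw [intervalIntegral.integral_eq_sub_of_hasDerivAt_of_le zero_le_one
    (f := fun x : ℝ => k ^ 2 * (x * √(1 - x ^ 2) * (√(1 - k ^ 2 * x ^ 2))⁻¹))]
  · simp
  · rw [← Set.uIcc_of_le zero_le_one]
    have h := continuousOn_sqrt_one_sub_inv_pow hk 1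
    simp only [pow_one] at h
    fun_prop
  · intro x hx
    exact hasDerivAt_mul_sqrt_mul_inv_sqrt (by nlinarith [hx.1, hx.2])
      (one_sub_sq_mul_sq_pos hk hx.1.le hx.2.le)
  · exact (intervalIntegrable_inv_sqrt_one_sub_sq.mul_continuousOn (by fun_prop)).sub
      ((intervalIntegrable_inv_sqrt_one_sub_sq.mul_continuousOn
        (continuousOn_sqrt_one_sub_inv_pow hk 3)).const_mul _)

theorem stmt_0 (k : ℝ) (hk : 0 < k) (hk1 : k < 1) :
    HasDerivAt EllK ((EllE k - (1 - k^2) * EllK k) / (k * (1 - k^2))) k := by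
  have hk2 : k ^ 2 < 1 := by nlinarith
  have hw := intervalIntegrable_inv_sqrt_one_sub_sq
  have hE : IntervalIntegrable (fun x : ℝ => (√(1 - x ^ 2))⁻¹ * √(1 - k ^ 2 * x ^ 2))
      volume 0 1 := hw.mul_continuousOn (by fun_prop)
  have hK : IntervalIntegrable (fun x : ℝ => (√(1 - x ^ 2))⁻¹ * (√(1 - k ^ 2 * x ^ 2))⁻¹)
      volume 0 1 := by
    simpa using hw.mul_continuousOn (continuousOn_sqrt_one_sub_inv_pow hk2 1)
  have hK3 := hw.mul_continuousOn (continuousOn_sqrt_one_sub_inv_pow hk2 3)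
  convert hasDerivAt_EllK_integral hk hk1 using 1
  rw [div_eq_iff (mul_pos hk (by linarith)).ne', EllE_eq_integral_mul, EllK_eq_integral_mul,
    ← intervalIntegral.integral_const_mul, ← intervalIntegral.integral_mul_const,
    ← intervalIntegral.integral_sub hE (hK.const_mul _)]
  refine (sub_eq_self.2 (integral_mul_sqrt_sub_eq_zero hk2)).symm.trans ?_
  rw [← intervalIntegral.integral_sub (hE.sub (hK.const_mul _)) (hE.sub (hK3.const_mul _))]
  refine intervalIntegral.integral_congr fun x hx => ?_
  rw [Set.uIcc_of_le zero_le_one] at hx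
  have hpos := one_sub_sq_mul_sq_pos hk2 hx.1 hx.2
  have hD := (Real.sqrt_pos.2 hpos).ne'
  have eD := Real.sq_sqrt hpos.le
  set D := √(1 - k ^ 2 * x ^ 2)
  have hx2 : D⁻¹ = D⁻¹ ^ 3 * (1 - k ^ 2 * x ^ 2) := by
    rw [← eD]; field_simp
  linear_combination (-(1 - k ^ 2) * (√(1 - x ^ 2))⁻¹) * hx2
end

section
/- For 0 < q < 1, the triple product θ₂(q)θ₃(q)θ₄(q) equals Σ_{n∈ℤ} 2n(-1)ⁿ q^{(n+1/2)²}. -/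
noncomputable def theta2 (q : ℝ) : ℝ := ∑' n : ℤ, q ^ (((n : ℝ) - 1/2)^2)

noncomputable def theta3 (q : ℝ) : ℝ := ∑' n : ℤ, q ^ ((n : ℝ)^2)

noncomputable def theta4 (q : ℝ) : ℝ := ∑' n : ℤ, (-1 : ℝ)^n * q ^ ((n : ℝ)^2)

open Filter Topology

section ThetaTripleProduct

theorem tsum_eq_zero_of_equiv_neg {ι : Type*} (σ : ι ≃ ι) {f : ι → ℝ}
    (h : ∀ i, f (σ i) = -f i) : ∑' i, f i = 0 := by
  have h1 := σ.tsum_eq f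
  simp only [h, tsum_neg] at h1
  linarith

theorem Summable.hasSum_mul_prod {f g : ℤ → ℝ} (hf : Summable f) (hg : Summable g) :
    HasSum (fun p : ℤ × ℤ => f p.1 * g p.2) ((∑' n, f n) * ∑' n, g n) :=
  hf.hasSum.mul hg.hasSum (summable_mul_of_summable_norm hf.norm hg.norm)

/-- The lattice `ℤ × ℤ` is the disjoint union of the pairs of equal parity, parametrised by
`(k + l, k - l)`, and the pairs of opposite parity, parametrised by `(k + l, k - l - 1)`. -/
theorem bijective_paritySplit : Function.Bijective
    (Sum.elim (fun p : ℤ × ℤ => (p.1 + p.2, p.1 - p.2))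
      (fun p : ℤ × ℤ => (p.1 + p.2, p.1 - p.2 - 1))) := by
  constructor
  · rintro (⟨a, b⟩ | ⟨a, b⟩) (⟨c, d⟩ | ⟨c, d⟩) h <;>
      simp only [Sum.elim_inl, Sum.elim_inr, Prod.mk.injEq, Sum.inl.injEq, Sum.inr.injEq,
        reduceCtorEq] at h ⊢ <;> omega
  · rintro ⟨m, n⟩
    rcases Int.even_or_odd (m + n) with ⟨k, hk⟩ | ⟨k, hk⟩
    · exact ⟨Sum.inl (k, m - k), by ext <;> simp; omega⟩
    · exact ⟨Sum.inr (k + 1, m - k - 1), by ext <;> simp; omega⟩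

theorem tsum_mul_tsum_eq_add_of_parity {f g : ℤ → ℝ} {a b : ℝ}
    (hf : Summable f) (hg : Summable g)
    (ha : HasSum (fun p : ℤ × ℤ => f (p.1 + p.2) * g (p.1 - p.2)) a)
    (hb : HasSum (fun p : ℤ × ℤ => f (p.1 + p.2) * g (p.1 - p.2 - 1)) b) :
    (∑' n, f n) * ∑' n, g n = a + b := by
  refine (hf.hasSum_mul_prod hg).unique ?_
  rw [← (Equiv.ofBijective _ bijective_paritySplit).hasSum_iff]
  exact HasSum.sum ha hb

theorem hasSum_of_forall_eq {ι : Type*} {f g : ι → ℝ} {a : ℝ} (hg : HasSum g a)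
    (h : ∀ i, f i = g i) : HasSum f a :=
  (funext h : f = g) ▸ hg

theorem neg_one_zpow_sub (k l : ℤ) : (-1 : ℝ) ^ (k - l) = (-1) ^ k * (-1) ^ l := by
  rw [zpow_sub₀ (by norm_num), div_eq_mul_inv, ← inv_zpow]
  norm_num

theorem rpow_mul_rpow_eq_sq {q : ℝ} (hq : 0 < q) {a b c d : ℝ} (h : a + b = 2 * (c + d)) :
    q ^ a * q ^ b = (q ^ 2) ^ c * (q ^ 2) ^ d := by
  rw [← Real.rpow_add hq, ← Real.rpow_add (by positivity), h, Real.rpow_mul hq.le]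
  norm_num

theorem summable_mul_rpow {q : ℝ} (hq : 0 < q) (hq1 : q < 1) {c e : ℤ → ℝ}
    (hc : ∀ n, |c n| ≤ 2 * |(n : ℝ)| + 1) (he : ∀ n : ℤ, (n : ℝ) ^ 2 - |(n : ℝ)| ≤ e n) :
    Summable fun n => c n * q ^ e n := by
  have hL : 0 < -Real.log q / Real.pi := div_pos (neg_pos.2 (Real.log_neg hq hq1)) Real.pi_pos
  have key (k : ℕ) : Summable fun n : ℤ => |(n : ℝ)| ^ k * q ^ ((n : ℝ) ^ 2 - |(n : ℝ)|) := by
    refine (summable_pow_mul_jacobiTheta₂_term_bound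
      (-Real.log q / Real.pi / 2) hL k).congr fun n => ?_
    rw [Real.rpow_def_of_pos hq, Int.cast_abs]
    congr 2
    field_simp
    ring
  refine (((key 1).mul_left 2).add (key 0)).of_norm_bounded fun n => ?_
  rw [norm_mul, Real.norm_eq_abs, Real.norm_of_nonneg (by positivity)]
  calc |c n| * q ^ e n ≤ (2 * |(n : ℝ)| + 1) * q ^ ((n : ℝ) ^ 2 - |(n : ℝ)|) :=
        mul_le_mul (hc n) (Real.rpow_le_rpow_of_exponent_ge hq hq1.le (he n))
          (by positivity) (by positivity)
    _ = _ := by ring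

theorem tendsto_tsum_mul_rpow {c e : ℤ → ℝ}
    (hc : ∀ n, |c n| ≤ 2 * |(n : ℝ)| + 1) (he : ∀ n : ℤ, (n : ℝ) ^ 2 - |(n : ℝ)| ≤ e n)
    (he0 : ∀ n, 0 ≤ e n) :
    Tendsto (fun q : ℝ => ∑' n, c n * q ^ e n) (𝓝[>] 0)
      (𝓝 (∑' n, c n * (0 : ℝ) ^ e n)) := by
  refine tendsto_tsum_of_dominated_convergence
    (summable_mul_rpow (q := 1 / 2) (by norm_num) (by norm_num) hc he).norm (fun n => ?_) ?_
  · refine Tendsto.const_mul _ ?_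
    exact ((Real.continuousAt_rpow_const 0 (e n) (Or.inr (he0 n))).tendsto).mono_left
      nhdsWithin_le_nhds
  · filter_upwards [Ioo_mem_nhdsGT (show (0 : ℝ) < 1 / 2 by norm_num)] with q hq n
    rw [norm_mul, norm_mul]
    gcongr
    rw [Real.norm_of_nonneg (Real.rpow_nonneg hq.1.le _), Real.norm_of_nonneg (by positivity)]
    exact Real.rpow_le_rpow hq.1.le hq.2.le (he0 n)

theorem sq_sub_abs_le_sq (n : ℤ) : (n : ℝ) ^ 2 - |(n : ℝ)| ≤ (n : ℝ) ^ 2 := by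
  linarith [abs_nonneg (n : ℝ)]

theorem sq_sub_abs_le_sq_add_self (n : ℤ) : (n : ℝ) ^ 2 - |(n : ℝ)| ≤ (n : ℝ) ^ 2 + n := by
  linarith [neg_abs_le (n : ℝ)]

theorem sq_sub_abs_le_add_half_sq (n : ℤ) :
    (n : ℝ) ^ 2 - |(n : ℝ)| ≤ ((n : ℝ) + 1 / 2) ^ 2 := by
  linarith [neg_abs_le (n : ℝ)]

theorem abs_neg_one_zpow_le (n : ℤ) : |(-1 : ℝ) ^ n| ≤ 2 * |(n : ℝ)| + 1 := by
  rw [abs_zpow]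
  simp

theorem abs_two_mul_neg_one_zpow_le (n : ℤ) :
    |2 * (n : ℝ) * (-1 : ℝ) ^ n| ≤ 2 * |(n : ℝ)| + 1 := by
  rw [abs_mul, abs_zpow, abs_mul]
  simp

theorem abs_two_mul_add_one_neg_one_zpow_le (n : ℤ) :
    |(2 * (n : ℝ) + 1) * (-1 : ℝ) ^ n| ≤ 2 * |(n : ℝ)| + 1 := by
  rw [abs_mul, abs_zpow]
  simpa [abs_mul] using abs_add_le (2 * (n : ℝ)) 1

/-- Up to the factor `π`, the derivative at `0` of the odd Jacobi theta function. -/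
noncomputable def theta1Deriv (q : ℝ) : ℝ :=
  ∑' n : ℤ, 2 * (n : ℝ) * (-1 : ℝ) ^ n * q ^ (((n : ℝ) + 1 / 2) ^ 2)

theorem theta2_eq (q : ℝ) : theta2 q = ∑' n : ℤ, q ^ (((n : ℝ) + 1 / 2) ^ 2) := by
  rw [theta2, ← (Equiv.addRight (1 : ℤ)).tsum_eq]
  refine tsum_congr fun n => ?_
  congr 2
  simp
  ring

theorem tsum_neg_one_zpow_mul_rpow_add_half_sq (q : ℝ) :
    ∑' n : ℤ, (-1 : ℝ) ^ n * q ^ (((n : ℝ) + 1 / 2) ^ 2) = 0 := by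
  refine tsum_eq_zero_of_equiv_neg (Equiv.subLeft (-1)) fun n => ?_
  rw [Equiv.subLeft_apply, neg_one_zpow_sub]
  push_cast
  rw [show (-1 - (n : ℝ) + 1 / 2) ^ 2 = ((n : ℝ) + 1 / 2) ^ 2 by ring]
  norm_num

theorem tsum_two_mul_neg_one_zpow_mul_rpow_sq (q : ℝ) :
    ∑' n : ℤ, 2 * (n : ℝ) * (-1 : ℝ) ^ n * q ^ ((n : ℝ) ^ 2) = 0 := by
  refine tsum_eq_zero_of_equiv_neg (Equiv.neg ℤ) fun n => ?_
  rw [Equiv.neg_apply, ← zero_sub, neg_one_zpow_sub]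
  simp

theorem summable_theta2 {q : ℝ} (hq : 0 < q) (hq1 : q < 1) :
    Summable fun n : ℤ => q ^ (((n : ℝ) + 1 / 2) ^ 2) := by
  simpa using summable_mul_rpow hq hq1 (c := fun _ => 1)
    (fun n => by simp) sq_sub_abs_le_add_half_sq

theorem summable_theta3 {q : ℝ} (hq : 0 < q) (hq1 : q < 1) :
    Summable fun n : ℤ => q ^ ((n : ℝ) ^ 2) := by
  simpa using summable_mul_rpow hq hq1 (c := fun _ => 1) (fun n => by simp) sq_sub_abs_le_sq

theorem summable_theta4 {q : ℝ} (hq : 0 < q) (hq1 : q < 1) :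
    Summable fun n : ℤ => (-1 : ℝ) ^ n * q ^ ((n : ℝ) ^ 2) :=
  summable_mul_rpow hq hq1 abs_neg_one_zpow_le sq_sub_abs_le_sq

theorem summable_neg_one_zpow_mul_rpow_add_half_sq {q : ℝ} (hq : 0 < q) (hq1 : q < 1) :
    Summable fun n : ℤ => (-1 : ℝ) ^ n * q ^ (((n : ℝ) + 1 / 2) ^ 2) :=
  summable_mul_rpow hq hq1 abs_neg_one_zpow_le sq_sub_abs_le_add_half_sq

theorem summable_theta1Deriv {q : ℝ} (hq : 0 < q) (hq1 : q < 1) :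
    Summable fun n : ℤ => 2 * (n : ℝ) * (-1 : ℝ) ^ n * q ^ (((n : ℝ) + 1 / 2) ^ 2) :=
  summable_mul_rpow hq hq1 abs_two_mul_neg_one_zpow_le sq_sub_abs_le_add_half_sq

theorem summable_two_mul_neg_one_zpow_mul_rpow_sq {q : ℝ} (hq : 0 < q) (hq1 : q < 1) :
    Summable fun n : ℤ => 2 * (n : ℝ) * (-1 : ℝ) ^ n * q ^ ((n : ℝ) ^ 2) :=
  summable_mul_rpow hq hq1 abs_two_mul_neg_one_zpow_le sq_sub_abs_le_sq

theorem summable_theta1Deriv_symm {q : ℝ} (hq : 0 < q) (hq1 : q < 1) :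
    Summable fun n : ℤ => (2 * (n : ℝ) + 1) * (-1 : ℝ) ^ n * q ^ (((n : ℝ) + 1 / 2) ^ 2) :=
  summable_mul_rpow hq hq1 abs_two_mul_add_one_neg_one_zpow_le sq_sub_abs_le_add_half_sq

theorem theta1Deriv_eq {q : ℝ} (hq : 0 < q) (hq1 : q < 1) : theta1Deriv q =
    ∑' n : ℤ, (2 * (n : ℝ) + 1) * (-1 : ℝ) ^ n * q ^ (((n : ℝ) + 1 / 2) ^ 2) := by
  have h := (summable_theta1Deriv hq hq1).tsum_add
    (summable_neg_one_zpow_mul_rpow_add_half_sq hq hq1)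
  rw [tsum_neg_one_zpow_mul_rpow_add_half_sq, add_zero] at h
  rw [theta1Deriv, ← h]
  exact tsum_congr fun n => by ring

theorem theta3_mul_theta4 {q : ℝ} (hq : 0 < q) (hq1 : q < 1) :
    theta3 q * theta4 q = theta4 (q ^ 2) ^ 2 := by
  have hq' : 0 < q ^ 2 := by positivity
  have hq1' : q ^ 2 < 1 := pow_lt_one₀ hq.le hq1 two_ne_zero
  have h4 := summable_theta4 hq' hq1'
  have hz := summable_neg_one_zpow_mul_rpow_add_half_sq hq' hq1'
  have hz' := (Equiv.subRight (1 : ℤ)).summable_iff.2 hz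
  refine (fun h => ?_) (tsum_mul_tsum_eq_add_of_parity (summable_theta3 hq hq1)
    (summable_theta4 hq hq1)
    (hasSum_of_forall_eq (h4.hasSum_mul_prod h4) fun p => ?_)
    (hasSum_of_forall_eq (hz'.hasSum_mul_prod hz) fun p => ?_))
  · rw [← theta3, ← theta4, ← theta4, tsum_neg_one_zpow_mul_rpow_add_half_sq] at h
    linear_combination h
  · rw [neg_one_zpow_sub]
    push_cast
    linear_combination ((-1) ^ p.1 * (-1) ^ p.2) * rpow_mul_rpow_eq_sq hq
      (show ((p.1 : ℝ) + p.2) ^ 2 + ((p.1 : ℝ) - p.2) ^ 2 = 2 * ((p.1 : ℝ) ^ 2 + (p.2 : ℝ) ^ 2) by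
        ring)
  · simp only [Function.comp, Equiv.subRight_apply, neg_one_zpow_sub]
    push_cast
    linear_combination ((-1) ^ p.1 * (-1) ^ p.2 * (-1) ^ (1 : ℤ)) * rpow_mul_rpow_eq_sq hq
      (show ((p.1 : ℝ) + p.2) ^ 2 + ((p.1 : ℝ) - p.2 - 1) ^ 2 =
        2 * (((p.1 : ℝ) - 1 + 1 / 2) ^ 2 + ((p.2 : ℝ) + 1 / 2) ^ 2) by ring)

theorem theta2_sq {q : ℝ} (hq : 0 < q) (hq1 : q < 1) :
    theta2 q ^ 2 = 2 * theta2 (q ^ 2) * theta3 (q ^ 2) := by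
  have hq' : 0 < q ^ 2 := by positivity
  have hq1' : q ^ 2 < 1 := pow_lt_one₀ hq.le hq1 two_ne_zero
  have h2 := summable_theta2 hq' hq1'
  have h3 := summable_theta3 hq' hq1'
  refine (fun h => ?_) (tsum_mul_tsum_eq_add_of_parity (summable_theta2 hq hq1)
    (summable_theta2 hq hq1)
    (hasSum_of_forall_eq (h2.hasSum_mul_prod h3) fun p => ?_)
    (hasSum_of_forall_eq (h3.hasSum_mul_prod h2) fun p => ?_))
  · rw [← theta2_eq, ← theta2_eq, ← theta3] at h
    linear_combination h
  · push_cast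
    exact rpow_mul_rpow_eq_sq hq (by ring)
  · push_cast
    exact rpow_mul_rpow_eq_sq hq (by ring)

theorem theta1Deriv_mul_theta2 {q : ℝ} (hq : 0 < q) (hq1 : q < 1) :
    theta1Deriv q * theta2 q = 2 * theta1Deriv (q ^ 2) * theta4 (q ^ 2) := by
  have hq' : 0 < q ^ 2 := by positivity
  have hq1' : q ^ 2 < 1 := pow_lt_one₀ hq.le hq1 two_ne_zero
  have h1 := summable_theta1Deriv_symm hq' hq1'
  have h4 := summable_theta4 hq' hq1'
  have hz := summable_neg_one_zpow_mul_rpow_add_half_sq hq' hq1'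
  have hw := summable_two_mul_neg_one_zpow_mul_rpow_sq hq' hq1'
  refine (fun h => ?_) (tsum_mul_tsum_eq_add_of_parity (summable_theta1Deriv_symm hq hq1)
    (summable_theta2 hq hq1)
    (hasSum_of_forall_eq ((h1.hasSum_mul_prod h4).add (hz.hasSum_mul_prod hw)) fun p => ?_)
    (hasSum_of_forall_eq ((h4.hasSum_mul_prod h1).add (hw.hasSum_mul_prod hz)) fun p => ?_))
  · rw [← theta2_eq, ← theta1Deriv_eq hq hq1, ← theta1Deriv_eq hq' hq1', ← theta4,
      tsum_neg_one_zpow_mul_rpow_add_half_sq] at h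
    linear_combination h
  · rw [zpow_add₀ (by norm_num)]
    push_cast
    linear_combination ((2 * ((p.1 : ℝ) + p.2) + 1) * (-1) ^ p.1 * (-1) ^ p.2) *
      rpow_mul_rpow_eq_sq hq
      (show ((p.1 : ℝ) + p.2 + 1 / 2) ^ 2 + ((p.1 : ℝ) - p.2 + 1 / 2) ^ 2 =
        2 * (((p.1 : ℝ) + 1 / 2) ^ 2 + (p.2 : ℝ) ^ 2) by ring)
  · rw [zpow_add₀ (by norm_num)]
    push_cast
    linear_combination ((2 * ((p.1 : ℝ) + p.2) + 1) * (-1) ^ p.1 * (-1) ^ p.2) *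
      rpow_mul_rpow_eq_sq hq
      (show ((p.1 : ℝ) + p.2 + 1 / 2) ^ 2 + ((p.1 : ℝ) - p.2 - 1 + 1 / 2) ^ 2 =
        2 * ((p.1 : ℝ) ^ 2 + ((p.2 : ℝ) + 1 / 2) ^ 2) by ring)

theorem theta2_pos {q : ℝ} (hq : 0 < q) (hq1 : q < 1) : 0 < theta2 q := by
  rw [theta2_eq]
  exact (summable_theta2 hq hq1).tsum_pos (fun n => by positivity) 0 (by positivity)

theorem theta3_pos {q : ℝ} (hq : 0 < q) (hq1 : q < 1) : 0 < theta3 q :=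
  (summable_theta3 hq hq1).tsum_pos (fun n => by positivity) 0 (by positivity)

theorem zero_rpow_sq (n : ℤ) : (0 : ℝ) ^ ((n : ℝ) ^ 2) = if n = 0 then 1 else 0 := by
  split_ifs with h
  · simp [h]
  · exact Real.zero_rpow (by positivity)

theorem tendsto_theta3 : Tendsto theta3 (𝓝[>] 0) (𝓝 1) := by
  have h := tendsto_tsum_mul_rpow (c := fun _ => 1) (fun n => by simp) sq_sub_abs_le_sq
    (fun n => sq_nonneg _)
  simpa [zero_rpow_sq, theta3] using! h

theorem tendsto_theta4 : Tendsto theta4 (𝓝[>] 0) (𝓝 1) := by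
  have h := tendsto_tsum_mul_rpow abs_neg_one_zpow_le sq_sub_abs_le_sq (fun n => sq_nonneg _)
  simpa [zero_rpow_sq, theta4] using! h

theorem sq_add_self_nonneg (n : ℤ) : 0 ≤ (n : ℝ) ^ 2 + n := by
  have h : 0 ≤ n ^ 2 + n := by
    rcases le_or_gt 0 n with h | h <;> nlinarith
  exact_mod_cast h

theorem zero_rpow_sq_add_self (n : ℤ) :
    (0 : ℝ) ^ ((n : ℝ) ^ 2 + n) = if n ∈ ({0, -1} : Finset ℤ) then 1 else 0 := by
  split_ifs with h
  · rcases (by simpa using h : n = 0 ∨ n = -1) with rfl | rfl <;> simp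
  · refine Real.zero_rpow fun h0 => h ?_
    have h1 : n * (n + 1) = 0 := by
      have : n ^ 2 + n = 0 := by exact_mod_cast h0
      linarith
    rcases mul_eq_zero.1 h1 with h2 | h2
    · simp [h2]
    · simp [eq_neg_of_add_eq_zero_left h2]

theorem tsum_mul_rpow_add_half_sq {q : ℝ} (hq : 0 < q) (c : ℤ → ℝ) :
    ∑' n : ℤ, c n * q ^ (((n : ℝ) + 1 / 2) ^ 2) =
      q ^ (1 / 4 : ℝ) * ∑' n : ℤ, c n * q ^ ((n : ℝ) ^ 2 + n) := by
  rw [← tsum_mul_left]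
  refine tsum_congr fun n => ?_
  rw [mul_left_comm, ← Real.rpow_add hq]
  congr 2
  ring

theorem tendsto_tsum_mul_rpow_add_half_sq_div {c : ℤ → ℝ}
    (hc : ∀ n, |c n| ≤ 2 * |(n : ℝ)| + 1) :
    Tendsto (fun q : ℝ => (∑' n : ℤ, c n * q ^ (((n : ℝ) + 1 / 2) ^ 2)) / q ^ (1 / 4 : ℝ))
      (𝓝[>] 0) (𝓝 (c 0 + c (-1))) := by
  have h := tendsto_tsum_mul_rpow hc sq_sub_abs_le_sq_add_self sq_add_self_nonneg
  have hsum : ∑' n : ℤ, c n * (0 : ℝ) ^ ((n : ℝ) ^ 2 + n) = c 0 + c (-1) := by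
    rw [tsum_eq_sum (s := {0, -1}) fun n hn => by rw [zero_rpow_sq_add_self, if_neg hn, mul_zero]]
    simp
  rw [hsum] at h
  refine h.congr' ?_
  filter_upwards [self_mem_nhdsWithin] with q (hq : 0 < q)
  rw [tsum_mul_rpow_add_half_sq hq, mul_div_cancel_left₀ _ (by positivity)]

theorem tendsto_theta1Deriv_div :
    Tendsto (fun q => theta1Deriv q / q ^ (1 / 4 : ℝ)) (𝓝[>] 0) (𝓝 2) := by
  simpa [theta1Deriv] using
    tendsto_tsum_mul_rpow_add_half_sq_div abs_two_mul_neg_one_zpow_le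

theorem tendsto_theta2_div :
    Tendsto (fun q => theta2 q / q ^ (1 / 4 : ℝ)) (𝓝[>] 0) (𝓝 2) := by
  have h := tendsto_tsum_mul_rpow_add_half_sq_div (c := fun _ => 1) (fun n => by simp)
  norm_num at h
  simpa [theta2_eq] using h

theorem tendsto_theta1Deriv_div_theta_mul :
    Tendsto (fun q => theta1Deriv q / (theta2 q * theta3 q * theta4 q)) (𝓝[>] 0) (𝓝 1) := by
  have h := tendsto_theta1Deriv_div.div
    ((tendsto_theta2_div.mul tendsto_theta3).mul tendsto_theta4) (by norm_num)
  rw [show (2 : ℝ) / (2 * 1 * 1) = 1 by norm_num] at h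
  refine h.congr' ?_
  filter_upwards [self_mem_nhdsWithin] with q (hq : 0 < q)
  have : q ^ (1 / 4 : ℝ) ≠ 0 := by positivity
  simp only [Pi.div_apply]
  rw [div_mul_eq_mul_div, div_mul_eq_mul_div, div_div_div_cancel_right₀ this]

theorem tendsto_pow_two_pow {q : ℝ} (hq : 0 < q) (hq1 : q < 1) :
    Tendsto (fun j : ℕ => q ^ 2 ^ j) atTop (𝓝[>] 0) :=
  tendsto_nhdsWithin_iff.2
    ⟨(tendsto_pow_atTop_nhds_zero_of_lt_one hq.le hq1).comp
      (tendsto_pow_atTop_atTop_of_one_lt one_lt_two), Eventually.of_forall fun _ => pow_pos hq _⟩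

theorem theta4_ne_zero {q : ℝ} (hq : 0 < q) (hq1 : q < 1) : theta4 q ≠ 0 := by
  intro h0
  have h (j : ℕ) : theta4 (q ^ 2 ^ j) = 0 := by
    induction j with
    | zero => simpa using h0
    | succ j ih =>
      have := theta3_mul_theta4 (pow_pos hq (2 ^ j)) (pow_lt_one₀ hq.le hq1 (by positivity))
      rw [ih, mul_zero, ← pow_mul, ← pow_succ] at this
      exact pow_eq_zero_iff two_ne_zero |>.1 this.symm
  have hlim := tendsto_theta4.comp (tendsto_pow_two_pow hq hq1)
  simp only [Function.comp_def, h] at hlim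
  exact zero_ne_one (tendsto_nhds_unique tendsto_const_nhds hlim)

theorem theta1Deriv_div_theta_mul_sq {q : ℝ} (hq : 0 < q) (hq1 : q < 1) :
    theta1Deriv (q ^ 2) / (theta2 (q ^ 2) * theta3 (q ^ 2) * theta4 (q ^ 2)) =
      theta1Deriv q / (theta2 q * theta3 q * theta4 q) := by
  have h2 := (theta2_pos hq hq1).ne'
  have h4 : 2 * theta4 (q ^ 2) ≠ 0 := mul_ne_zero two_ne_zero
    (theta4_ne_zero (by positivity) (pow_lt_one₀ hq.le hq1 two_ne_zero))
  rw [← mul_div_mul_right _ _ h4, ← mul_div_mul_right (theta1Deriv q) _ h2]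
  congr 1
  · linear_combination -theta1Deriv_mul_theta2 hq hq1
  · linear_combination -(theta3 q * theta4 q) * theta2_sq hq hq1 -
      2 * theta2 (q ^ 2) * theta3 (q ^ 2) * theta3_mul_theta4 hq hq1

theorem theta1Deriv_div_theta_mul {q : ℝ} (hq : 0 < q) (hq1 : q < 1) :
    theta1Deriv q / (theta2 q * theta3 q * theta4 q) = 1 := by
  have h (j : ℕ) : theta1Deriv (q ^ 2 ^ j) /
      (theta2 (q ^ 2 ^ j) * theta3 (q ^ 2 ^ j) * theta4 (q ^ 2 ^ j)) =
        theta1Deriv q / (theta2 q * theta3 q * theta4 q) := by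
    induction j with
    | zero => simp
    | succ j ih =>
      rw [pow_succ, pow_mul, theta1Deriv_div_theta_mul_sq (pow_pos hq _)
        (pow_lt_one₀ hq.le hq1 (by positivity)), ih]
  have hlim := tendsto_theta1Deriv_div_theta_mul.comp (tendsto_pow_two_pow hq hq1)
  simp only [Function.comp_def, h] at hlim
  exact tendsto_nhds_unique tendsto_const_nhds hlim

end ThetaTripleProduct

theorem stmt_3 (q : ℝ) (hq : 0 < q) (hq1 : q < 1) :
    theta2 q * theta3 q * theta4 q
      = ∑' n : ℤ, 2 * (n : ℝ) * (-1 : ℝ)^n * q ^ (((n : ℝ) + 1/2)^2) :=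
  ((div_eq_one_iff_eq (mul_ne_zero (mul_ne_zero (theta2_pos hq hq1).ne' (theta3_pos hq hq1).ne')
    (theta4_ne_zero hq hq1))).1 (theta1Deriv_div_theta_mul hq hq1)).symm
end

section
/- For real s > 1, the double sum Σ_{(m₁,m₂)∈ℤ²} (-1)^{m₂} / ((m₁-1/2)² + m₂²)^s equals 2^{2s+1} L₋₈(s) L₈(s). -/
noncomputable def chiNeg8 (n : ℕ) : ℝ :=
  if n % 8 = 1 ∨ n % 8 = 3 then 1 else if n % 8 = 5 ∨ n % 8 = 7 then -1 else 0

noncomputable def chi8 (n : ℕ) : ℝ :=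
  if n % 8 = 1 ∨ n % 8 = 7 then 1 else if n % 8 = 3 ∨ n % 8 = 5 then -1 else 0

noncomputable def LNeg8 (s : ℝ) : ℝ := ∑' n : ℕ, chiNeg8 n / (n : ℝ) ^ s

noncomputable def L8 (s : ℝ) : ℝ := ∑' n : ℕ, chi8 n / (n : ℝ) ^ s

open Finset in
theorem Nat.Prime.sum_divisors_mul {p m : ℕ} (hp : p.Prime) (hm : m ≠ 0) (f : ℕ →* ℤ) :
    ∑ d ∈ (p * m).divisors, f d = (1 + f p) * ∑ d ∈ m.divisors, f d -
      f p * ∑ d ∈ m.divisors with p * d ∣ m, f d := by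
  have hsplit : (p * m).divisors = m.divisors ∪ m.divisors.image (p * ·) := by
    ext d
    simp only [Nat.mem_divisors, mem_union, mem_image]
    constructor
    · rintro ⟨hd, -⟩
      by_cases hpd : p ∣ d
      · obtain ⟨e, rfl⟩ := hpd
        exact Or.inr ⟨e, ⟨Nat.dvd_of_mul_dvd_mul_left hp.pos hd, hm⟩, rfl⟩
      · exact Or.inl ⟨(((Nat.Prime.coprime_iff_not_dvd hp).2 hpd).symm).dvd_of_dvd_mul_left hd, hm⟩
    · rintro (⟨hd, -⟩ | ⟨e, ⟨he, -⟩, rfl⟩)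
      · exact ⟨hd.mul_left p, mul_ne_zero hp.ne_zero hm⟩
      · exact ⟨Nat.mul_dvd_mul_left p he, mul_ne_zero hp.ne_zero hm⟩
  have hinter : m.divisors ∩ m.divisors.image (p * ·) =
      (m.divisors.filter (p * · ∣ m)).image (p * ·) := by
    ext d
    simp only [Nat.mem_divisors, mem_inter, mem_image, mem_filter]
    constructor
    · rintro ⟨⟨hd, -⟩, e, he, rfl⟩
      exact ⟨e, ⟨he, hd⟩, rfl⟩
    · rintro ⟨e, ⟨he, hd⟩, rfl⟩
      exact ⟨⟨hd, hm⟩, e, he, rfl⟩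
  have hinj : Function.Injective (p * · : ℕ → ℕ) := fun a b h ↦ Nat.eq_of_mul_eq_mul_left hp.pos h
  have key := sum_union_inter (s₁ := m.divisors) (s₂ := m.divisors.image (p * ·)) (f := (f ·))
  rw [← hsplit, hinter, sum_image hinj.injOn, sum_image hinj.injOn] at key
  simp only [map_mul, ← mul_sum] at key
  linarith

namespace GaussianInt

theorem finite_setOf_norm_eq (n : ℕ) : {z : GaussianInt | z.norm = n}.Finite := by
  refine Set.Finite.of_injOn (f := fun z : GaussianInt ↦ (z.re, z.im))
    (t := Set.Icc (-n : ℤ) n ×ˢ Set.Icc (-n : ℤ) n) ?_ ?_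
    ((Set.finite_Icc _ _).prod (Set.finite_Icc _ _))
  · intro z hz
    simp only [Set.mem_ofPred_eq, Zsqrtd.norm_def] at hz
    simp only [Set.mem_prod, Set.mem_Icc]
    refine ⟨⟨?_, ?_⟩, ⟨?_, ?_⟩⟩ <;> nlinarith [mul_self_nonneg z.re, mul_self_nonneg z.im]
  · intro z _ w _ h
    simp only [Prod.mk.injEq] at h
    exact Zsqrtd.ext h.1 h.2

theorem ncard_norm_eq_mul_and_dvd (w : GaussianInt) {k : ℕ} (hk : 0 < k) (hw : w.norm = k) (m : ℕ) :
    {z : GaussianInt | z.norm = (k * m : ℕ) ∧ w ∣ z}.ncard =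
      {z : GaussianInt | z.norm = m}.ncard := by
  have hw0 : w ≠ 0 := by
    rintro rfl
    simp at hw
    omega
  rw [← Set.ncard_image_of_injective {z : GaussianInt | z.norm = m} (mul_right_injective₀ hw0)]
  congr 1
  ext z
  simp only [Set.mem_ofPred_eq, Set.mem_image]
  constructor
  · rintro ⟨hz, v, rfl⟩
    refine ⟨v, ?_, rfl⟩
    rw [Zsqrtd.norm_mul, hw] at hz
    push_cast at hz
    exact mul_left_cancel₀ (by positivity) hz
  · rintro ⟨v, hv, rfl⟩
    exact ⟨by rw [Zsqrtd.norm_mul, hw, hv]; push_cast; rfl, dvd_mul_right _ _⟩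

theorem prime_of_norm_eq_prime {w : GaussianInt} {p : ℕ} (hp : p.Prime) (hw : w.norm = p) :
    Prime w := by
  rw [← irreducible_iff_prime]
  refine ⟨fun hu ↦ ?_, fun a b hab ↦ ?_⟩
  · rw [← Zsqrtd.norm_eq_one_iff, hw] at hu
    exact hp.one_lt.ne' (by simpa using hu)
  · rw [← Zsqrtd.norm_eq_one_iff, ← Zsqrtd.norm_eq_one_iff]
    have h : a.norm.natAbs * b.norm.natAbs = p := by
      rw [← Int.natAbs_mul, ← Zsqrtd.norm_mul, ← hab, hw, Int.natAbs_natCast]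
    rcases hp.eq_one_or_self_of_dvd _ ⟨_, h.symm⟩ with h1 | h1
    · exact Or.inl h1
    · right
      rw [h1] at h
      exact Nat.eq_of_mul_eq_mul_left hp.pos (by simpa using h)

theorem not_star_dvd_self {w : GaussianInt} {p : ℕ} (hp : p.Prime) (hp2 : p ≠ 2)
    (hw : w.norm = p) : ¬ star w ∣ w := by
  intro h
  have hdvd : star w ∣ ((2 * w.re : ℤ) : GaussianInt) := by
    have : ((2 * w.re : ℤ) : GaussianInt) = star w + w := by
      ext <;> simp
      ring
    rw [this]
    exact dvd_add dvd_rfl h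
  have hn : (p : ℤ) ∣ 2 * w.re * (2 * w.re) := by
    obtain ⟨v, hv⟩ := hdvd
    rw [← Zsqrtd.norm_intCast (d := -1), hv, Zsqrtd.norm_mul, Zsqrtd.norm_conj, hw]
    exact dvd_mul_right _ _
  have hpp : Prime (p : ℤ) := Nat.prime_iff_prime_int.1 hp
  have hp2' : ¬ (p : ℤ) ∣ 2 := by
    intro h2
    exact hp2 ((Nat.prime_dvd_prime_iff_eq hp Nat.prime_two).1 (by exact_mod_cast h2))
  have hre : (p : ℤ) ∣ w.re := by
    rcases hpp.dvd_or_dvd hn with h | h <;>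
      exact (hpp.dvd_or_dvd h).resolve_left hp2'
  have hnorm : w.re * w.re + w.im * w.im = p := by
    rw [← hw, Zsqrtd.norm_def]; ring
  have him : (p : ℤ) ∣ w.im := by
    have : (p : ℤ) ∣ w.im * w.im := by
      rw [← (Int.dvd_add_right (hre.mul_right w.re)), hnorm]
    rcases hpp.dvd_or_dvd this with h | h <;> exact h
  have hsq : (p : ℤ) * p ∣ p * 1 := by
    rw [mul_one]
    conv_rhs => rw [← hnorm]
    exact dvd_add (mul_dvd_mul hre hre) (mul_dvd_mul him him)
  exact hpp.not_dvd_one ((mul_dvd_mul_iff_left hpp.ne_zero).1 hsq)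

theorem natCast_dvd_of_norm_eq_mul {p m : ℕ} (hp : p.Prime) (hp3 : p % 4 = 3) {z : GaussianInt}
    (hz : z.norm = (p * m : ℕ)) : (p : GaussianInt) ∣ z := by
  have := Fact.mk hp
  have hprime := prime_of_nat_prime_of_mod_four_eq_three p hp3
  have h : (p : GaussianInt) ∣ z * star z := by
    rw [← Zsqrtd.norm_eq_mul_conj, hz]
    push_cast
    exact dvd_mul_right _ _
  rcases hprime.dvd_or_dvd h with h | h
  · exact h
  · simpa [starRingEnd_apply] using map_dvd (starRingEnd GaussianInt) h

/-- The Hecke recursion for the number of Gaussian integers of given norm. -/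
theorem ncard_norm_eq_prime_mul {p m : ℕ} (hp : p.Prime) (hp2 : p ≠ 2) :
    ({z : GaussianInt | z.norm = (p * m : ℕ)}.ncard : ℤ) =
      (1 + ZMod.χ₄ p) * {z : GaussianInt | z.norm = m}.ncard -
        ZMod.χ₄ p * {z : GaussianInt | z.norm = (p * m : ℕ) ∧ (p : GaussianInt) ∣ z}.ncard := by
  have hmod : p % 4 = 1 ∨ p % 4 = 3 := by
    have := hp.eq_two_or_odd
    omega
  rcases hmod with h1 | h3
  · have := Fact.mk hp
    obtain ⟨a, b, hab⟩ := Nat.Prime.sq_add_sq (p := p) (by omega)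
    set w : GaussianInt := ⟨a, b⟩
    have hw : w.norm = p := by
      rw [Zsqrtd.norm_def, ← hab]
      push_cast
      ring
    have hw' : (star w).norm = p := by rw [Zsqrtd.norm_conj, hw]
    have hwp := prime_of_norm_eq_prime hp hw
    have hwp' := prime_of_norm_eq_prime hp hw'
    have hpw : (p : GaussianInt) = w * star w := by
      rw [← Zsqrtd.norm_eq_mul_conj, hw]; rfl
    have hunion : {z : GaussianInt | z.norm = (p * m : ℕ)} =
        {z : GaussianInt | z.norm = (p * m : ℕ) ∧ w ∣ z} ∪
          {z : GaussianInt | z.norm = (p * m : ℕ) ∧ star w ∣ z} := by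
      ext z
      simp only [Set.mem_union, Set.mem_ofPred_eq, ← and_or_left, iff_self_and]
      intro hz
      have h : w ∣ z * star z := by
        rw [← Zsqrtd.norm_eq_mul_conj, hz]
        push_cast
        rw [hpw, mul_assoc]
        exact dvd_mul_right _ _
      rcases hwp.dvd_or_dvd h with h | h
      · exact Or.inl h
      · right
        simpa [starRingEnd_apply] using map_dvd (starRingEnd GaussianInt) h
    have hinter : {z : GaussianInt | z.norm = (p * m : ℕ) ∧ w ∣ z} ∩
        {z : GaussianInt | z.norm = (p * m : ℕ) ∧ star w ∣ z} =
        {z : GaussianInt | z.norm = (p * m : ℕ) ∧ (p : GaussianInt) ∣ z} := by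
      ext z
      simp only [Set.mem_inter_iff, Set.mem_ofPred_eq]
      constructor
      · rintro ⟨⟨hz, v, rfl⟩, -, h⟩
        refine ⟨hz, ?_⟩
        rw [hpw]
        exact mul_dvd_mul_left w ((hwp'.dvd_or_dvd h).resolve_left (not_star_dvd_self hp hp2 hw))
      · rintro ⟨hz, h⟩
        rw [hpw] at h
        exact ⟨⟨hz, dvd_of_mul_right_dvd h⟩, hz, dvd_of_mul_left_dvd h⟩
    have hfin := finite_setOf_norm_eq (p * m)
    have key := Set.ncard_union_add_ncard_inter {z : GaussianInt | z.norm = (p * m : ℕ) ∧ w ∣ z}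
      {z : GaussianInt | z.norm = (p * m : ℕ) ∧ star w ∣ z} (hfin.subset fun z hz ↦ hz.1)
      (hfin.subset fun z hz ↦ hz.1)
    rw [← hunion, hinter, ncard_norm_eq_mul_and_dvd w hp.pos hw,
      ncard_norm_eq_mul_and_dvd _ hp.pos hw'] at key
    rw [ZMod.χ₄_nat_one_mod_four h1]
    have key' := congrArg (Nat.cast : ℕ → ℤ) key
    rw [Nat.cast_add, Nat.cast_add] at key'
    linarith
  · rw [ZMod.χ₄_nat_three_mod_four h3]
    have : {z : GaussianInt | z.norm = (p * m : ℕ) ∧ (p : GaussianInt) ∣ z} =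
        {z : GaussianInt | z.norm = (p * m : ℕ)} := by
      ext z
      simp only [Set.mem_ofPred_eq, and_iff_left_iff_imp]
      exact natCast_dvd_of_norm_eq_mul hp h3
    rw [this]
    ring

theorem ncard_norm_eq_one : {z : GaussianInt | z.norm = (1 : ℕ)}.ncard = 4 := by
  have h : {z : GaussianInt | z.norm = (1 : ℕ)} =
      (({⟨1, 0⟩, ⟨-1, 0⟩, ⟨0, 1⟩, ⟨0, -1⟩} : Finset GaussianInt) : Set GaussianInt) := by
    ext ⟨x, y⟩
    simp only [Set.mem_ofPred_eq, Zsqrtd.norm_def, Finset.coe_insert, Finset.coe_singleton,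
      Set.mem_insert_iff, Set.mem_singleton_iff, Zsqrtd.mk.injEq]
    constructor
    · intro h
      push_cast at h
      have hx : x ≤ 1 := by nlinarith [mul_self_nonneg y]
      have hx' : -1 ≤ x := by nlinarith [mul_self_nonneg y]
      have hy : y ≤ 1 := by nlinarith [mul_self_nonneg x]
      have hy' : -1 ≤ y := by nlinarith [mul_self_nonneg x]
      interval_cases x <;> interval_cases y <;> simp_all
    · rintro (⟨rfl, rfl⟩ | ⟨rfl, rfl⟩ | ⟨rfl, rfl⟩ | ⟨rfl, rfl⟩) <;> simp
  rw [h, Set.ncard_coe_finset]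
  decide

/-- **Jacobi's two-square theorem** for odd numbers. -/
theorem ncard_norm_eq_of_odd {n : ℕ} (hn : Odd n) :
    ({z : GaussianInt | z.norm = n}.ncard : ℤ) = 4 * ∑ d ∈ n.divisors, ZMod.χ₄ d := by
  induction n using Nat.strong_induction_on with
  | _ n ih =>
  by_cases hn1 : n = 1
  · subst hn1
    rw [ncard_norm_eq_one]
    simp
  obtain ⟨p, hp, m, rfl⟩ := Nat.exists_prime_and_dvd hn1
  obtain ⟨hpodd, hmodd⟩ := Nat.odd_mul.1 hn
  have hp2 : p ≠ 2 := by rintro rfl; exact absurd hpodd (by decide)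
  have hm0 : m ≠ 0 := by rintro rfl; simp at hmodd
  have hlt : m < p * m := lt_mul_of_one_lt_left (Nat.pos_of_ne_zero hm0) hp.one_lt
  have hrec := hp.sum_divisors_mul hm0
    ((ZMod.χ₄ : ZMod 4 →* ℤ).comp (Nat.castRingHom (ZMod 4) : ℕ →* ZMod 4))
  change ∑ d ∈ (p * m).divisors, ZMod.χ₄ d = (1 + ZMod.χ₄ p) * ∑ d ∈ m.divisors, ZMod.χ₄ d -
      ZMod.χ₄ p * ∑ d ∈ m.divisors with p * d ∣ m, ZMod.χ₄ d at hrec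
  rw [ncard_norm_eq_prime_mul hp hp2, hrec, ih m hlt hmodd]
  have hrest : ({z : GaussianInt | z.norm = (p * m : ℕ) ∧ (p : GaussianInt) ∣ z}.ncard : ℤ) =
      4 * ∑ d ∈ m.divisors with p * d ∣ m, ZMod.χ₄ d := by
    by_cases hpm : p ∣ m
    · obtain ⟨k, rfl⟩ := hpm
      have hdiv : (p * k).divisors.filter (p * · ∣ p * k) = k.divisors := by
        ext d
        simp only [Finset.mem_filter, Nat.mem_divisors, Nat.mul_dvd_mul_iff_left hp.pos]
        constructor
        · rintro ⟨⟨-, -⟩, h⟩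
          exact ⟨h, right_ne_zero_of_mul hm0⟩
        · rintro ⟨h, -⟩
          exact ⟨⟨h.mul_left p, hm0⟩, h⟩
      have hk : k < p * (p * k) :=
        lt_of_le_of_lt (Nat.le_mul_of_pos_left k hp.pos) hlt
      rw [hdiv, ← ih k hk (Nat.odd_mul.1 hmodd).2, ← mul_assoc,
        ncard_norm_eq_mul_and_dvd _ (Nat.mul_pos hp.pos hp.pos)
          (by rw [Zsqrtd.norm_natCast]; push_cast; rfl)]
    · have hempty : {z : GaussianInt | z.norm = (p * m : ℕ) ∧ (p : GaussianInt) ∣ z} = ∅ := by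
        rw [Set.eq_empty_iff_forall_notMem]
        rintro z ⟨hz, v, rfl⟩
        rw [Zsqrtd.norm_mul, Zsqrtd.norm_natCast] at hz
        push_cast at hz
        rw [mul_assoc] at hz
        have := mul_left_cancel₀ (by exact_mod_cast hp.ne_zero) hz
        exact hpm (Int.natCast_dvd_natCast.1 ⟨_, this.symm⟩)
      rw [hempty, Finset.filter_false_of_mem]
      · simp
      · intro d _ h
        exact hpm (dvd_of_mul_right_dvd h)
  rw [hrest]
  ring

end GaussianInt

theorem chi8_eq (n : ℕ) : chi8 n = (ZMod.χ₈ n : ℤ) := by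
  rw [ZMod.χ₈_nat_eq_if_mod_eight, chi8]
  split_ifs <;> first | omega | simp

theorem chiNeg8_eq (n : ℕ) : chiNeg8 n = (ZMod.χ₈' n : ℤ) := by
  rw [ZMod.χ₈'_nat_eq_if_mod_eight, chiNeg8]
  split_ifs <;> first | omega | simp

theorem chi8_mul (m n : ℕ) : chi8 (m * n) = chi8 m * chi8 n := by
  rw [chi8_eq, chi8_eq, chi8_eq, Nat.cast_mul, map_mul, Int.cast_mul]

theorem chiNeg8_eq_χ₄_mul_chi8 (n : ℕ) : chiNeg8 n = (ZMod.χ₄ n : ℤ) * chi8 n := by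
  rw [chiNeg8_eq, chi8_eq]
  exact_mod_cast ZMod.χ₈'_int_eq_χ₄_mul_χ₈ n

theorem chi8_of_not_odd {n : ℕ} (hn : ¬ Odd n) : chi8 n = 0 := by
  rw [Nat.not_odd_iff] at hn
  rw [chi8, if_neg (by omega), if_neg (by omega)]

theorem abs_chi8_le_one (n : ℕ) : |chi8 n| ≤ 1 := by
  rw [chi8]
  split_ifs <;> simp

theorem abs_chiNeg8_le_one (n : ℕ) : |chiNeg8 n| ≤ 1 := by
  rw [chiNeg8]
  split_ifs <;> simp

theorem summable_norm_div_natCast_rpow {χ : ℕ → ℝ} (hχ : ∀ n, |χ n| ≤ 1) {s : ℝ} (hs : 1 < s) :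
    Summable fun n : ℕ ↦ ‖χ n / (n : ℝ) ^ s‖ := by
  refine (Real.summable_one_div_nat_rpow.2 hs).of_nonneg_of_le (fun _ ↦ norm_nonneg _) fun n ↦ ?_
  have hn : 0 ≤ (n : ℝ) ^ s := by positivity
  rw [norm_div, Real.norm_of_nonneg hn, Real.norm_eq_abs]
  exact div_le_div_of_nonneg_right (hχ n) hn

/-- The norm of the Gaussian integer `(2 * m₁ - 1) + 2 * m₂ * I`. -/
def oddEvenNorm (m : ℤ × ℤ) : ℕ := ((2 * m.1 - 1) ^ 2 + (2 * m.2) ^ 2).toNat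

theorem oddEvenNorm_cast (m : ℤ × ℤ) :
    (oddEvenNorm m : ℤ) = (2 * m.1 - 1) ^ 2 + (2 * m.2) ^ 2 :=
  Int.toNat_of_nonneg (by positivity)

theorem chi8_oddEvenNorm (m : ℤ × ℤ) : chi8 (oddEvenNorm m) = (-1) ^ m.2 := by
  have h := oddEvenNorm_cast m
  obtain ⟨k, hk⟩ := Int.even_mul_succ_self (m.1 - 1)
  have h1 : (2 * m.1 - 1) ^ 2 = 8 * k + 1 := by linear_combination 4 * hk
  rw [h1] at h
  rcases Int.even_or_odd m.2 with hm | hm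
  · rw [hm.neg_one_zpow]
    obtain ⟨j, hj⟩ := hm
    have h2 : (2 * m.2) ^ 2 = 8 * (2 * j ^ 2) := by rw [hj]; ring
    rw [h2] at h
    rw [chi8, if_pos (by omega)]
  · rw [hm.neg_one_zpow]
    obtain ⟨j, hj⟩ := hm
    have h2 : (2 * m.2) ^ 2 = 8 * (2 * j ^ 2 + 2 * j) + 4 := by rw [hj]; ring
    rw [h2] at h
    rw [chi8, if_neg (by omega), if_pos (by omega)]

theorem neg_one_zpow_div_rpow_eq (s : ℝ) (m : ℤ × ℤ) :
    (-1 : ℝ) ^ m.2 / (((m.1 : ℝ) - 1/2)^2 + (m.2 : ℝ)^2) ^ s =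
      2 ^ (2 * s) * (chi8 (oddEvenNorm m) / (oddEvenNorm m : ℝ) ^ s) := by
  have h : (oddEvenNorm m : ℝ) = 2 ^ (2 : ℝ) * (((m.1 : ℝ) - 1/2)^2 + (m.2 : ℝ)^2) := by
    have : (oddEvenNorm m : ℝ) = (2 * m.1 - 1) ^ 2 + (2 * m.2) ^ 2 := by
      exact_mod_cast oddEvenNorm_cast m
    rw [this, Real.rpow_two]
    ring
  rw [h, Real.mul_rpow (by positivity) (by positivity), ← Real.rpow_mul (by norm_num),
    chi8_oddEvenNorm]
  have : (2 : ℝ) ^ (2 * s) ≠ 0 := by positivity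
  field_simp

theorem summable_chi8_oddEvenNorm {s : ℝ} (hs : 1 < s) :
    Summable fun m : ℤ × ℤ ↦ chi8 (oddEvenNorm m) / (oddEvenNorm m : ℝ) ^ s := by
  have hinj : Function.Injective fun m : ℤ × ℤ ↦ ![2 * m.1 - 1, 2 * m.2] := by
    intro m n h
    have h0 := congrFun h 0
    have h1 := congrFun h 1
    simp only [Matrix.cons_val_zero, Matrix.cons_val_one] at h0 h1
    ext <;> omega
  refine Summable.of_norm_bounded ((EisensteinSeries.summable_one_div_norm_rpow
    (k := 2 * s) (by linarith)).comp_injective hinj) fun m ↦ ?_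
  set x : Fin 2 → ℤ := ![2 * m.1 - 1, 2 * m.2] with hx
  have hx0 : 0 < ‖x‖ := by
    rw [norm_pos_iff]
    intro h
    have := congrFun h 0
    simp only [hx, Matrix.cons_val_zero, Pi.zero_apply] at this
    omega
  have hle : ‖x‖ ^ (2 : ℝ) ≤ oddEvenNorm m := by
    have hcast : (oddEvenNorm m : ℝ) = (2 * m.1 - 1) ^ 2 + (2 * m.2) ^ 2 := by
      exact_mod_cast oddEvenNorm_cast m
    rw [Real.rpow_two, hcast]
    refine (Real.le_sqrt (norm_nonneg _) (by positivity)).1 ?_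
    rw [pi_norm_le_iff_of_nonneg (Real.sqrt_nonneg _), Fin.forall_fin_two]
    constructor <;> refine Real.le_sqrt_of_sq_le ?_ <;>
      simp only [hx, Matrix.cons_val_zero, Matrix.cons_val_one, Int.norm_eq_abs, sq_abs] <;>
      push_cast <;> nlinarith [sq_nonneg (2 * (m.1 : ℝ) - 1), sq_nonneg (2 * (m.2 : ℝ))]
  have hpos : 0 < (oddEvenNorm m : ℝ) := lt_of_lt_of_le (by positivity) hle
  rw [norm_div, Real.norm_of_nonneg (by positivity : 0 ≤ (oddEvenNorm m : ℝ) ^ s),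
    Real.norm_eq_abs, Function.comp_apply, Real.rpow_neg hx0.le, Real.rpow_mul hx0.le,
    ← one_div]
  exact div_le_div₀ zero_le_one (abs_chi8_le_one _) (by positivity)
    (Real.rpow_le_rpow (by positivity) hle (by linarith))

theorem ncard_norm_eq_two_mul_card_oddEvenNorm {n : ℕ} (hn : Odd n) :
    {z : GaussianInt | z.norm = n}.ncard = 2 * (oddEvenNorm ⁻¹' {n}).ncard := by
  let f : ℤ × ℤ → GaussianInt := fun m ↦ ⟨2 * m.1 - 1, 2 * m.2⟩
  let g : ℤ × ℤ → GaussianInt := fun m ↦ ⟨2 * m.2, 2 * m.1 - 1⟩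
  have hf : Function.Injective f := by
    intro a b h
    simp only [f, Zsqrtd.mk.injEq] at h
    ext <;> omega
  have hg : Function.Injective g := by
    intro a b h
    simp only [g, Zsqrtd.mk.injEq] at h
    ext <;> omega
  have hmem (m : ℤ × ℤ) : m ∈ oddEvenNorm ⁻¹' {n} ↔ (2 * m.1 - 1) ^ 2 + (2 * m.2) ^ 2 = n := by
    rw [← oddEvenNorm_cast, Set.mem_preimage, Set.mem_singleton_iff, Nat.cast_inj]
  have hfn (m : ℤ × ℤ) : (f m).norm = (2 * m.1 - 1) ^ 2 + (2 * m.2) ^ 2 := by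
    simp only [f, Zsqrtd.norm_def]; ring
  have hgn (m : ℤ × ℤ) : (g m).norm = (2 * m.1 - 1) ^ 2 + (2 * m.2) ^ 2 := by
    simp only [g, Zsqrtd.norm_def]; ring
  have hunion : {z : GaussianInt | z.norm = n} =
      f '' (oddEvenNorm ⁻¹' {n}) ∪ g '' (oddEvenNorm ⁻¹' {n}) := by
    ext z
    simp only [Set.mem_ofPred_eq, Set.mem_union, Set.mem_image, hmem]
    constructor
    · intro hz
      have hz' : z.re * z.re + z.im * z.im = n := by rw [← hz, Zsqrtd.norm_def]; ring
      have hodd : Odd (z.re * z.re + z.im * z.im) := by rw [hz']; exact_mod_cast hn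
      rcases Int.even_or_odd' z.re with ⟨a, ha | ha⟩ <;>
        rcases Int.even_or_odd' z.im with ⟨b, hb | hb⟩
      · exact absurd hodd (by rw [ha, hb]; simp [parity_simps])
      · refine Or.inr ⟨(b + 1, a), ?_, Zsqrtd.ext ?_ ?_⟩
        · rw [← hz', ha, hb]; ring
        · simp [g, ha]
        · simp only [g, hb]; ring
      · refine Or.inl ⟨(a + 1, b), ?_, Zsqrtd.ext ?_ ?_⟩
        · rw [← hz', ha, hb]; ring
        · simp only [f, ha]; ring
        · simp [f, hb]
      · exact absurd hodd (by rw [ha, hb]; simp [parity_simps])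
    · rintro (⟨m, hm, rfl⟩ | ⟨m, hm, rfl⟩)
      · rw [hfn, hm]
      · rw [hgn, hm]
  have hdisj : Disjoint (f '' (oddEvenNorm ⁻¹' {n})) (g '' (oddEvenNorm ⁻¹' {n})) := by
    rw [Set.disjoint_left]
    rintro _ ⟨a, -, rfl⟩ ⟨b, -, h⟩
    simp only [f, g, Zsqrtd.mk.injEq] at h
    omega
  have hfin := GaussianInt.finite_setOf_norm_eq n
  rw [hunion] at hfin ⊢
  rw [Set.ncard_union_eq hdisj (hfin.subset Set.subset_union_left)
    (hfin.subset Set.subset_union_right), Set.ncard_image_of_injective _ hf,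
    Set.ncard_image_of_injective _ hg, two_mul]

theorem ncard_oddEvenNorm_mul_chi8 (n : ℕ) :
    ((oddEvenNorm ⁻¹' {n}).ncard : ℝ) * chi8 n =
      2 * ((∑ d ∈ n.divisors, ZMod.χ₄ d : ℤ) : ℝ) * chi8 n := by
  by_cases hn : Odd n
  · congr 1
    have h := GaussianInt.ncard_norm_eq_of_odd hn
    rw [ncard_norm_eq_two_mul_card_oddEvenNorm hn] at h
    have h' : ((oddEvenNorm ⁻¹' {n}).ncard : ℤ) = 2 * ∑ d ∈ n.divisors, ZMod.χ₄ d := by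
      push_cast at h
      linarith
    exact_mod_cast h'
  · simp [chi8_of_not_odd hn]

theorem hasSum_LNeg8_mul_L8 {s : ℝ} (hs : 1 < s) :
    HasSum (fun n : ℕ ↦ ((∑ d ∈ n.divisors, ZMod.χ₄ d : ℤ) : ℝ) * (chi8 n / (n : ℝ) ^ s))
      (LNeg8 s * L8 s) := by
  have h₁ := summable_norm_div_natCast_rpow abs_chiNeg8_le_one hs
  have h₂ := summable_norm_div_natCast_rpow abs_chi8_le_one hs
  have h := (summable_mul_of_summable_norm h₁ h₂).hasSum.tsum_fiberwise
    (fun d : ℕ × ℕ ↦ d.1 * d.2)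
  rw [← tsum_mul_tsum_of_summable_norm h₁ h₂] at h
  refine (congrArg (HasSum · (LNeg8 s * L8 s)) (funext fun n : ℕ ↦ ?_)).mp h
  rcases eq_or_ne n 0 with rfl | hn
  · have hzero (d : (fun d : ℕ × ℕ ↦ d.1 * d.2) ⁻¹' {0}) :
        chiNeg8 d.1.1 / (d.1.1 : ℝ) ^ s * (chi8 d.1.2 / (d.1.2 : ℝ) ^ s) = 0 := by
      rcases Nat.mul_eq_zero.1 (show d.1.1 * d.1.2 = 0 from d.2) with h0 | h0 <;>
        simp [h0, chi8, chiNeg8]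
    rw [tsum_congr hzero]
    simp
  · have hset : (fun d : ℕ × ℕ ↦ d.1 * d.2) ⁻¹' {n} = (n.divisorsAntidiagonal : Set (ℕ × ℕ)) := by
      ext d
      simp [hn]
    rw [hset, Finset.tsum_subtype' n.divisorsAntidiagonal
      fun d ↦ chiNeg8 d.1 / (d.1 : ℝ) ^ s * (chi8 d.2 / (d.2 : ℝ) ^ s), Int.cast_sum,
      Finset.sum_mul, ← Nat.sum_divisorsAntidiagonal
        fun d _ ↦ ((ZMod.χ₄ d : ℤ) : ℝ) * (chi8 n / (n : ℝ) ^ s)]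
    refine Finset.sum_congr rfl fun d hd ↦ ?_
    rw [← (Nat.mem_divisorsAntidiagonal.1 hd).1, chi8_mul, chiNeg8_eq_χ₄_mul_chi8, Nat.cast_mul,
      Real.mul_rpow (Nat.cast_nonneg _) (Nat.cast_nonneg _)]
    ring

theorem hasSum_chi8_oddEvenNorm {s : ℝ} (hs : 1 < s) :
    HasSum (fun m : ℤ × ℤ ↦ chi8 (oddEvenNorm m) / (oddEvenNorm m : ℝ) ^ s)
      (2 * (LNeg8 s * L8 s)) := by
  have hsum := (summable_chi8_oddEvenNorm hs).hasSum
  have h := hsum.tsum_fiberwise oddEvenNorm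
  have hfiber (n : ℕ) : ∑' m : oddEvenNorm ⁻¹' {n},
      chi8 (oddEvenNorm m) / (oddEvenNorm m : ℝ) ^ s =
      2 * (((∑ d ∈ n.divisors, ZMod.χ₄ d : ℤ) : ℝ) * (chi8 n / (n : ℝ) ^ s)) := by
    have hc (m : oddEvenNorm ⁻¹' {n}) :
        chi8 (oddEvenNorm m) / (oddEvenNorm m : ℝ) ^ s = chi8 n / (n : ℝ) ^ s := by
      rw [show oddEvenNorm m = n from m.2]
    rw [tsum_congr hc, tsum_const, Nat.card_coe_set_eq, nsmul_eq_mul, ← mul_div_assoc,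
      ncard_oddEvenNorm_mul_chi8]
    ring
  simp only [hfiber] at h
  rwa [h.unique ((hasSum_LNeg8_mul_L8 hs).mul_left 2)] at hsum

theorem stmt_5 (s : ℝ) (hs : 1 < s) :
    ∑' m : ℤ × ℤ,
        (-1 : ℝ) ^ m.2 / (((m.1 : ℝ) - 1/2)^2 + (m.2 : ℝ)^2) ^ s
      = 2 ^ (2 * s + 1) * LNeg8 s * L8 s := by
  simp only [neg_one_zpow_div_rpow_eq]
  rw [((hasSum_chi8_oddEvenNorm hs).mul_left _).tsum_eq, Real.rpow_add_one two_ne_zero]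
  ring
end

section
/- ∫₀¹ 1/(k^{1/2}(1-k²)^{3/4} K(k)) dk = 2 log(1+√2). -/
open scoped Real
open MeasureTheory

/-- The theta constant `θ₂` as a function of `t`, where the nome is `q = exp (-π t)`. -/
noncomputable def thetaTwo (t : ℝ) : ℝ := ∑' n : ℤ, Real.exp (-π * (n + 1 / 2) ^ 2 * t)

/-- The theta constant `θ₃` as a function of `t`, where the nome is `q = exp (-π t)`. -/
noncomputable def thetaThree (t : ℝ) : ℝ := ∑' n : ℤ, Real.exp (-π * n ^ 2 * t)

/-- The theta constant `θ₄` as a function of `t`, where the nome is `q = exp (-π t)`. -/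
noncomputable def thetaFour (t : ℝ) : ℝ := ∑' n : ℤ, (-1) ^ n * Real.exp (-π * n ^ 2 * t)

section ThetaIdentities

open HurwitzZeta

variable {t : ℝ}

lemma hasSum_thetaTwo (ht : 0 < t) :
    HasSum (fun n : ℤ ↦ Real.exp (-π * (n + 1 / 2) ^ 2 * t)) (thetaTwo t) := by
  have h := hasSum_int_evenKernel (1 / 2) ht
  exact h.summable.hasSum

lemma hasSum_thetaThree (ht : 0 < t) :
    HasSum (fun n : ℤ ↦ Real.exp (-π * n ^ 2 * t)) (thetaThree t) := by
  have h := hasSum_int_evenKernel 0 ht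
  simp only [add_zero] at h
  exact h.summable.hasSum

lemma hasSum_thetaFour (ht : 0 < t) :
    HasSum (fun n : ℤ ↦ (-1) ^ n * Real.exp (-π * n ^ 2 * t)) (thetaFour t) := by
  have h : Summable fun n : ℤ ↦ (-1) ^ n * Real.exp (-π * n ^ 2 * t) := by
    refine Summable.of_norm ?_
    simpa [abs_zpow] using (hasSum_thetaThree ht).summable
  exact h.hasSum

lemma thetaTwo_eq_evenKernel (ht : 0 < t) : thetaTwo t = evenKernel (1 / 2 : ℝ) t :=
  (hasSum_thetaTwo ht).unique (hasSum_int_evenKernel (1 / 2) ht)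

lemma thetaThree_eq_cosKernel (ht : 0 < t) : thetaThree t = cosKernel 0 t := by
  have h := hasSum_int_evenKernel 0 ht
  simp only [add_zero, QuotientAddGroup.mk_zero] at h
  rw [← evenKernel_eq_cosKernel_of_zero]
  exact (hasSum_thetaThree ht).unique h

lemma thetaFour_eq_cosKernel (ht : 0 < t) : thetaFour t = cosKernel (1 / 2 : ℝ) t := by
  have h := hasSum_int_cosKernel (1 / 2) ht
  rw [← Complex.ofReal_inj]
  refine HasSum.unique ?_ h
  convert Complex.hasSum_ofReal.2 (hasSum_thetaFour ht) using 2 with n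
  push_cast
  congr 1
  rw [show (2 * π * Complex.I * (1 / 2) * n : ℂ) = n * (π * Complex.I) by ring,
    Complex.exp_int_mul, Complex.exp_pi_mul_I]

lemma thetaTwo_eq_thetaFour_inv (ht : 0 < t) :
    thetaTwo t = 1 / √t * thetaFour (1 / t) := by
  rw [thetaTwo_eq_evenKernel ht, thetaFour_eq_cosKernel (by positivity),
    evenKernel_functional_equation, Real.sqrt_eq_rpow]

lemma thetaThree_eq_thetaThree_inv (ht : 0 < t) :
    thetaThree t = 1 / √t * thetaThree (1 / t) := by
  rw [thetaThree_eq_cosKernel ht, thetaThree_eq_cosKernel (by positivity),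
    ← evenKernel_eq_cosKernel_of_zero, evenKernel_functional_equation,
    evenKernel_eq_cosKernel_of_zero, Real.sqrt_eq_rpow]

lemma thetaFour_eq_thetaTwo_inv (ht : 0 < t) :
    thetaFour t = 1 / √t * thetaTwo (1 / t) := by
  rw [thetaTwo_eq_thetaFour_inv (by positivity : 0 < 1 / t), one_div_one_div]
  have := Real.sqrt_pos.2 ht
  simp
  field_simp

lemma thetaTwo_pos (ht : 0 < t) : 0 < thetaTwo t :=
  (hasSum_thetaTwo ht).summable.tsum_pos (fun _ ↦ (Real.exp_pos _).le) 0 (Real.exp_pos _)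

lemma thetaThree_pos (ht : 0 < t) : 0 < thetaThree t :=
  (hasSum_thetaThree ht).summable.tsum_pos (fun _ ↦ (Real.exp_pos _).le) 0 (Real.exp_pos _)

lemma thetaFour_pos (ht : 0 < t) : 0 < thetaFour t := by
  rw [thetaFour_eq_thetaTwo_inv ht]
  have := thetaTwo_pos (t := 1 / t) (by positivity)
  positivity

/-- A sum may be split along two injections whose ranges are complementary. -/
lemma hasSum_of_isCompl_range {α β : Type*} {f : β → ℝ} {g h : α → β} {a b : ℝ}
    (hg : Function.Injective g) (hh : Function.Injective h)
    (hc : IsCompl (Set.range g) (Set.range h)) (ha : HasSum (f ∘ g) a) (hb : HasSum (f ∘ h) b) :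
    HasSum f (a + b) :=
  HasSum.add_isCompl hc (hg.hasSum_range_iff.2 ha) (hh.hasSum_range_iff.2 hb)

/-- The even-index and odd-index parts of a sum over `ℤ`. -/
lemma hasSum_int_even_add_odd {f : ℤ → ℝ} {a b : ℝ} (ha : HasSum (fun n ↦ f (2 * n)) a)
    (hb : HasSum (fun n ↦ f (2 * n + 1)) b) : HasSum f (a + b) := by
  refine hasSum_of_isCompl_range (g := fun n ↦ 2 * n) (h := fun n ↦ 2 * n + 1)
    (fun m n h ↦ by simpa using h) (fun m n h ↦ by simpa using h) ?_ ha hb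
  have e0 : Set.range (fun n : ℤ ↦ 2 * n) = {n | Even n} := by
    ext n; simp [even_iff_two_dvd, dvd_def]
  have e1 : Set.range (fun n : ℤ ↦ 2 * n + 1) = {n | Odd n} := by
    ext n; simp [Odd]
  rw [e0, e1]
  exact Int.isCompl_even_odd

lemma thetaThree_eq_add (ht : 0 < t) :
    thetaThree t = thetaThree (4 * t) + thetaTwo (4 * t) := by
  refine (hasSum_thetaThree ht).unique (hasSum_int_even_add_odd ?_ ?_)
  · convert hasSum_thetaThree (by positivity : 0 < 4 * t) using 3 with n
    push_cast; ring
  · convert hasSum_thetaTwo (by positivity : 0 < 4 * t) using 3 with n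
    push_cast; ring

lemma thetaFour_eq_sub (ht : 0 < t) :
    thetaFour t = thetaThree (4 * t) - thetaTwo (4 * t) := by
  rw [sub_eq_add_neg]
  refine (hasSum_thetaFour ht).unique (hasSum_int_even_add_odd ?_ ?_)
  · convert hasSum_thetaThree (by positivity : 0 < 4 * t) using 2 with n
    rw [Even.neg_one_zpow (by simp), one_mul]
    push_cast; ring_nf
  · refine Eq.subst (motive := (HasSum · _)) (funext fun n ↦ ?_)
      (hasSum_thetaTwo (by positivity : 0 < 4 * t)).neg
    rw [Odd.neg_one_zpow (by simp), neg_one_mul]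
    push_cast; ring_nf

lemma thetaThree_sq (ht : 0 < t) :
    thetaThree t ^ 2 = thetaThree (2 * t) ^ 2 + thetaTwo (2 * t) ^ 2 := by
  have ht2 : 0 < 2 * t := by positivity
  have prod {f : ℤ → ℝ} {a : ℝ} (h : HasSum f a) (hf : ∀ n, 0 ≤ f n) :
      HasSum (fun p : ℤ × ℤ ↦ f p.1 * f p.2) (a ^ 2) := by
    rw [sq]
    exact h.mul h (h.summable.mul_of_nonneg h.summable hf hf)
  have h1 := prod (hasSum_thetaThree ht) fun _ ↦ (Real.exp_pos _).le
  have h2 := prod (hasSum_thetaThree ht2) fun _ ↦ (Real.exp_pos _).le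
  have h3 := prod (hasSum_thetaTwo ht2) fun _ ↦ (Real.exp_pos _).le
  have hg (c : ℤ) : Function.Injective fun p : ℤ × ℤ ↦ (p.1 + p.2 + c, p.1 - p.2) := by
    rintro ⟨a, b⟩ ⟨a', b'⟩ h
    simp only [Prod.mk.injEq] at h ⊢
    omega
  refine h1.unique (hasSum_of_isCompl_range (hg 0) (hg 1) ?_ ?_ ?_)
  · rw [isCompl_iff, Set.disjoint_left, codisjoint_iff, Set.top_eq_univ, Set.eq_univ_iff_forall]
    refine ⟨?_, ?_⟩
    · rintro _ ⟨⟨a, b⟩, rfl⟩ ⟨⟨a', b'⟩, h⟩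
      simp only [Prod.mk.injEq] at h
      omega
    · rintro ⟨m, n⟩
      rcases Int.even_or_odd' (m + n) with ⟨k, hk | hk⟩
      · refine Or.inl ⟨(k, k - n), ?_⟩
        simp only [Prod.mk.injEq]
        omega
      · refine Or.inr ⟨(k, k - n), ?_⟩
        simp only [Prod.mk.injEq]
        omega
  · refine Eq.subst (motive := (HasSum · _)) (funext fun p ↦ ?_) h2
    simp only [Function.comp, ← Real.exp_add]
    push_cast; ring_nf
  · refine Eq.subst (motive := (HasSum · _)) (funext fun p ↦ ?_) h3
    simp only [Function.comp, ← Real.exp_add]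
    push_cast; ring_nf

lemma thetaThree_sq_add_thetaFour_sq (ht : 0 < t) :
    thetaThree t ^ 2 + thetaFour t ^ 2 = 2 * thetaThree (2 * t) ^ 2 := by
  have h := thetaThree_sq (t := 1 / (2 * t)) (by positivity)
  have e : 2 * (1 / (2 * t)) = 1 / t := by field_simp
  rw [e, thetaThree_eq_thetaThree_inv (t := 1 / (2 * t)) (by positivity),
    thetaThree_eq_thetaThree_inv (t := 1 / t) (by positivity),
    thetaTwo_eq_thetaFour_inv (t := 1 / t) (by positivity)] at h
  simp only [one_div_one_div, mul_pow, div_pow, one_pow] at h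
  rw [Real.sq_sqrt (by positivity), Real.sq_sqrt (by positivity)] at h
  field_simp at h
  linarith

lemma thetaFour_sq (ht : 0 < t) :
    thetaFour t ^ 2 = thetaThree (2 * t) ^ 2 - thetaTwo (2 * t) ^ 2 := by
  linarith [thetaThree_sq ht, thetaThree_sq_add_thetaFour_sq ht]

lemma thetaTwo_sq (ht : 0 < t) :
    thetaTwo t ^ 2 = 2 * thetaTwo (2 * t) * thetaThree (2 * t) := by
  have h2 : 0 < t / 2 := by positivity
  have h3 := thetaThree_sq h2
  have h4 := thetaFour_sq h2
  rw [thetaThree_eq_add h2] at h3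
  rw [thetaFour_eq_sub h2] at h4
  rw [show 4 * (t / 2) = 2 * t by ring, show 2 * (t / 2) = t by ring] at h3 h4
  linarith

/-- Jacobi's quartic identity. -/
lemma thetaThree_pow_four (ht : 0 < t) :
    thetaThree t ^ 4 = thetaTwo t ^ 4 + thetaFour t ^ 4 := by
  linear_combination (thetaThree t ^ 2 + thetaThree (2 * t) ^ 2 + thetaTwo (2 * t) ^ 2) *
      thetaThree_sq ht -
    (thetaFour t ^ 2 + thetaThree (2 * t) ^ 2 - thetaTwo (2 * t) ^ 2) * thetaFour_sq ht -
    (thetaTwo t ^ 2 + 2 * thetaTwo (2 * t) * thetaThree (2 * t)) * thetaTwo_sq ht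

lemma thetaFour_two_mul_sq (ht : 0 < t) :
    thetaFour (2 * t) ^ 2 = thetaThree t * thetaFour t := by
  have h3 := thetaThree_pos ht
  have h4 := thetaFour_pos ht
  rw [← sq_eq_sq₀ (by positivity) (by positivity)]
  linear_combination thetaThree_sq ht * (-thetaFour t ^ 2) -
    (thetaThree (2 * t) ^ 2 + thetaTwo (2 * t) ^ 2) * thetaFour_sq ht -
    thetaThree_pow_four (t := 2 * t) (by positivity)

lemma thetaThree_half_eq : thetaThree (1 / 2) = (1 + √2) * thetaFour (1 / 2) := by
  have h3 := thetaThree_eq_add (t := 1 / 2) (by norm_num)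
  have h4 := thetaFour_eq_sub (t := 1 / 2) (by norm_num)
  have h := thetaFour_eq_thetaTwo_inv (t := 1 / 2) (by norm_num)
  norm_num at h3 h4 h
  have h2 : √2 * √2 = 2 := by norm_num
  norm_num
  linear_combination h3 + h4 * (-1 - √2) + h4 * √2 - √2 * h - thetaTwo 2 * h2

end ThetaIdentities

section ThetaDerivatives

open Filter Topology

variable {t : ℝ}

lemma analyticAt_tsum_pow {e : ℕ → ℕ} (he : ∀ n, n ≤ e n) {x : ℝ} (hx : |x| < 1) :
    AnalyticAt ℝ (fun q : ℝ ↦ ∑' n, q ^ e n) x := by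
  obtain ⟨r, hxr, hr⟩ := exists_between hx
  have hr0 : 0 ≤ r := (abs_nonneg x).trans hxr.le
  have hd : DifferentiableOn ℂ (fun z : ℂ ↦ ∑' n, z ^ e n) (Metric.ball 0 r) := by
    refine Complex.differentiableOn_tsum_of_summable_norm (u := fun n ↦ r ^ n)
      (summable_geometric_of_lt_one hr0 hr) (fun n ↦ by fun_prop) Metric.isOpen_ball
      fun n z hz ↦ ?_
    rw [mem_ball_zero_iff] at hz
    rw [norm_pow]
    exact (pow_le_pow_left₀ (norm_nonneg _) hz.le _).trans
      (pow_le_pow_of_le_one hr0 hr.le (he n))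
  have ha : AnalyticAt ℂ (fun z : ℂ ↦ ∑' n, z ^ e n) x :=
    hd.analyticAt (Metric.isOpen_ball.mem_nhds (by simpa using hxr))
  convert ha.re_ofReal using 2 with q
  rw [← Complex.ofReal_re (∑' n, q ^ e n), Complex.ofReal_tsum]
  simp

/-- A power series in the nome, as a function of `t`. -/
noncomputable def nomeSeries (e : ℕ → ℕ) (t : ℝ) : ℝ := ∑' n, Real.exp (-π * t) ^ e n

lemma abs_exp_neg_pi_mul_lt_one (ht : 0 < t) : |Real.exp (-π * t)| < 1 := by
  rw [Real.abs_exp, Real.exp_lt_one_iff]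
  nlinarith [Real.pi_pos]

lemma tendsto_exp_neg_pi_mul : Tendsto (fun t ↦ Real.exp (-π * t)) atTop (𝓝 0) :=
  Real.tendsto_exp_atBot.comp (tendsto_id.const_mul_atTop_of_neg (by simp [Real.pi_pos]))

lemma hasSum_nomeSeries {e : ℕ → ℕ} (he : ∀ n, n ≤ e n) (ht : 0 < t) :
    HasSum (fun n ↦ Real.exp (-π * t) ^ e n) (nomeSeries e t) := by
  have h := abs_exp_neg_pi_mul_lt_one ht
  rw [Real.abs_exp] at h
  refine (Summable.of_nonneg_of_le (fun n ↦ by positivity) (fun n ↦ ?_)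
    (summable_geometric_of_lt_one (Real.exp_pos _).le h)).hasSum
  exact pow_le_pow_of_le_one (Real.exp_pos _).le h.le (he n)

lemma hasDerivAt_nomeSeries {e : ℕ → ℕ} (he : ∀ n, n ≤ e n) (ht : 0 < t) :
    HasDerivAt (nomeSeries e)
      (deriv (fun q : ℝ ↦ ∑' n, q ^ e n) (Real.exp (-π * t)) * (Real.exp (-π * t) * -π)) t := by
  have h1 := (analyticAt_tsum_pow he (abs_exp_neg_pi_mul_lt_one ht)).differentiableAt.hasDerivAt
  have h2 : HasDerivAt (fun t ↦ Real.exp (-π * t)) (Real.exp (-π * t) * -π) t := by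
    simpa using ((hasDerivAt_id t).const_mul (-π)).exp
  exact h1.comp t h2

lemma tendsto_nomeSeries {e : ℕ → ℕ} (he : ∀ n, n ≤ e n) :
    Tendsto (nomeSeries e) atTop (𝓝 (∑' n, 0 ^ e n)) :=
  (analyticAt_tsum_pow he (x := 0) (by simp)).continuousAt.tendsto.comp tendsto_exp_neg_pi_mul

lemma tendsto_deriv_nomeSeries {e : ℕ → ℕ} (he : ∀ n, n ≤ e n) :
    Tendsto (deriv (nomeSeries e)) atTop (𝓝 0) := by
  have h1 := (analyticAt_tsum_pow he (x := 0) (by simp)).deriv.continuousAt.tendsto.comp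
    tendsto_exp_neg_pi_mul
  have h := h1.mul (tendsto_exp_neg_pi_mul.mul_const (-π))
  rw [zero_mul, mul_zero] at h
  refine h.congr' ?_
  filter_upwards [eventually_gt_atTop 0] with t ht
  exact (hasDerivAt_nomeSeries he ht).deriv.symm

lemma le_sq_self (n : ℕ) : n ≤ n ^ 2 := Nat.le_self_pow two_ne_zero n

lemma le_succ_sq (n : ℕ) : n ≤ (n + 1) ^ 2 := by nlinarith

lemma le_mul_succ (n : ℕ) : n ≤ n * (n + 1) := by nlinarith

lemma thetaThree_eq_nomeSeries (ht : 0 < t) :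
    thetaThree t = nomeSeries (fun n ↦ n ^ 2) t + nomeSeries (fun n ↦ (n + 1) ^ 2) t := by
  refine (hasSum_thetaThree ht).unique (HasSum.of_nat_of_neg_add_one ?_ ?_)
  · refine Eq.subst (motive := (HasSum · _)) (funext fun n ↦ ?_) (hasSum_nomeSeries le_sq_self ht)
    rw [← Real.exp_nat_mul]
    push_cast; ring_nf
  · refine Eq.subst (motive := (HasSum · _)) (funext fun n ↦ ?_) (hasSum_nomeSeries le_succ_sq ht)
    rw [← Real.exp_nat_mul]
    push_cast; ring_nf

lemma thetaTwo_eq_nomeSeries (ht : 0 < t) :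
    thetaTwo t = 2 * Real.exp (-(π / 4) * t) * nomeSeries (fun n ↦ n * (n + 1)) t := by
  rw [mul_assoc, two_mul]
  have h := (hasSum_nomeSeries le_mul_succ ht).mul_left (Real.exp (-(π / 4) * t))
  refine (hasSum_thetaTwo ht).unique (HasSum.of_nat_of_neg_add_one ?_ ?_)
  · refine Eq.subst (motive := (HasSum · _)) (funext fun n ↦ ?_) h
    rw [← Real.exp_nat_mul, ← Real.exp_add]
    push_cast; ring_nf
  · refine Eq.subst (motive := (HasSum · _)) (funext fun n ↦ ?_) h
    rw [← Real.exp_nat_mul, ← Real.exp_add]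
    push_cast; ring_nf

lemma tsum_zero_pow_sq : ∑' n : ℕ, (0 : ℝ) ^ n ^ 2 = 1 := by
  rw [tsum_eq_single 0 fun n hn ↦ by simp [hn]]
  simp

lemma tsum_zero_pow_mul_succ : ∑' n : ℕ, (0 : ℝ) ^ (n * (n + 1)) = 1 := by
  rw [tsum_eq_single 0 fun n hn ↦ by simp [hn]]
  simp

lemma tendsto_thetaThree : Tendsto thetaThree atTop (𝓝 1) := by
  have h := (tendsto_nomeSeries le_sq_self).add (tendsto_nomeSeries le_succ_sq)
  rw [tsum_zero_pow_sq] at h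
  simp only [ne_eq, Nat.add_eq_zero_iff, one_ne_zero, and_false, not_false_eq_true, pow_eq_zero_iff,
    zero_pow, tsum_zero, add_zero, OfNat.ofNat_ne_zero] at h
  refine h.congr' ?_
  filter_upwards [eventually_gt_atTop 0] with t ht
  exact (thetaThree_eq_nomeSeries ht).symm

lemma tendsto_thetaTwo : Tendsto thetaTwo atTop (𝓝 0) := by
  have h1 : Tendsto (fun t ↦ 2 * Real.exp (-(π / 4) * t)) atTop (𝓝 (2 * 0)) :=
    (Real.tendsto_exp_atBot.comp
      (tendsto_id.const_mul_atTop_of_neg (by simp [Real.pi_pos]))).const_mul 2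
  have h := h1.mul (tendsto_nomeSeries le_mul_succ)
  simp only [mul_zero, zero_mul] at h
  refine h.congr' ?_
  filter_upwards [eventually_gt_atTop 0] with t ht
  exact (thetaTwo_eq_nomeSeries ht).symm

lemma tendsto_thetaFour : Tendsto thetaFour atTop (𝓝 1) := by
  have h4 : Tendsto (fun t : ℝ ↦ 4 * t) atTop atTop := tendsto_id.const_mul_atTop (by norm_num)
  have h := (tendsto_thetaThree.comp h4).sub (tendsto_thetaTwo.comp h4)
  rw [sub_zero] at h
  refine h.congr' ?_
  filter_upwards [eventually_gt_atTop 0] with t ht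
  exact (thetaFour_eq_sub ht).symm

lemma differentiableAt_thetaThree (ht : 0 < t) : DifferentiableAt ℝ thetaThree t := by
  refine DifferentiableAt.congr_of_eventuallyEq
    ((hasDerivAt_nomeSeries le_sq_self ht).add
      (hasDerivAt_nomeSeries le_succ_sq ht)).differentiableAt ?_
  filter_upwards [lt_mem_nhds ht] with s hs
  exact thetaThree_eq_nomeSeries hs

lemma hasDerivAt_thetaTwo (ht : 0 < t) :
    HasDerivAt thetaTwo (2 * (Real.exp (-(π / 4) * t) * -(π / 4)) *
      nomeSeries (fun n ↦ n * (n + 1)) t + 2 * Real.exp (-(π / 4) * t) *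
      deriv (nomeSeries fun n ↦ n * (n + 1)) t) t := by
  have h1 : HasDerivAt (fun t ↦ 2 * Real.exp (-(π / 4) * t))
      (2 * (Real.exp (-(π / 4) * t) * -(π / 4))) t := by
    simpa using (((hasDerivAt_id t).const_mul (-(π / 4))).exp).const_mul 2
  refine (h1.mul (hasDerivAt_nomeSeries le_mul_succ ht).differentiableAt.hasDerivAt
    ).congr_of_eventuallyEq ?_
  filter_upwards [lt_mem_nhds ht] with s hs
  exact thetaTwo_eq_nomeSeries hs

lemma tendsto_logDeriv_thetaThree : Tendsto (logDeriv thetaThree) atTop (𝓝 0) := by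
  have h := ((tendsto_deriv_nomeSeries le_sq_self).add
    (tendsto_deriv_nomeSeries le_succ_sq)).div tendsto_thetaThree one_ne_zero
  rw [add_zero, zero_div] at h
  refine h.congr' ?_
  filter_upwards [eventually_gt_atTop 0] with t ht
  have e : thetaThree =ᶠ[𝓝 t]
      nomeSeries (fun n ↦ n ^ 2) + nomeSeries fun n ↦ (n + 1) ^ 2 := by
    filter_upwards [lt_mem_nhds ht] with s hs
    exact thetaThree_eq_nomeSeries hs
  rw [logDeriv_apply, e.deriv_eq, deriv_add (hasDerivAt_nomeSeries le_sq_self ht).differentiableAt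
    (hasDerivAt_nomeSeries le_succ_sq ht).differentiableAt]
  rfl

lemma tendsto_logDeriv_thetaTwo : Tendsto (logDeriv thetaTwo) atTop (𝓝 (-(π / 4))) := by
  have h1 := tendsto_nomeSeries le_mul_succ
  rw [tsum_zero_pow_mul_succ] at h1
  have h := ((tendsto_deriv_nomeSeries le_mul_succ).div h1 one_ne_zero).const_add (-(π / 4))
  rw [zero_div, add_zero] at h
  refine h.congr' ?_
  filter_upwards [eventually_gt_atTop 0] with t ht
  have h2 := thetaTwo_pos ht
  rw [thetaTwo_eq_nomeSeries ht] at h2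
  have h3 : 0 < nomeSeries (fun n ↦ n * (n + 1)) t := pos_of_mul_pos_right h2 (by positivity)
  rw [logDeriv_apply, (hasDerivAt_thetaTwo ht).deriv, thetaTwo_eq_nomeSeries ht, Pi.div_apply]
  field_simp

lemma eq_of_comp_two_mul_eq {f : ℝ → ℝ} {c : ℝ} (hf : ∀ t, 0 < t → f (2 * t) = f t)
    (hc : Tendsto f atTop (𝓝 c)) (ht : 0 < t) : f t = c := by
  have h (n : ℕ) : f (2 ^ n * t) = f t := by
    induction n with
    | zero => simp
    | succ n ih => rw [pow_succ', mul_assoc, hf _ (by positivity), ih]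
  have h2 : Tendsto (fun n : ℕ ↦ (2 : ℝ) ^ n * t) atTop atTop :=
    (tendsto_pow_atTop_atTop_of_one_lt one_lt_two).atTop_mul_const ht
  refine tendsto_nhds_unique ?_ (hc.comp h2)
  simp [Function.comp_def, h]

lemma hasDerivAt_thetaTwo_div_thetaThree (ht : 0 < t) :
    HasDerivAt (fun t ↦ thetaTwo t / thetaThree t)
      (thetaTwo t / thetaThree t * (logDeriv thetaTwo t - logDeriv thetaThree t)) t := by
  have h2 := thetaTwo_pos ht
  have h3 := thetaThree_pos ht
  have h := (hasDerivAt_thetaTwo ht).differentiableAt.hasDerivAt.div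
    (differentiableAt_thetaThree ht).hasDerivAt h3.ne'
  refine h.congr_deriv ?_
  rw [logDeriv_apply, logDeriv_apply]
  field_simp

lemma logDeriv_thetaTwo_sub_logDeriv_thetaThree_two_mul (ht : 0 < t) :
    (logDeriv thetaTwo (2 * t) - logDeriv thetaThree (2 * t)) * thetaFour t ^ 2 =
      (logDeriv thetaTwo t - logDeriv thetaThree t) * thetaThree t ^ 2 := by
  have ht2 : 0 < 2 * t := by positivity
  have h2 := thetaTwo_pos ht
  have h3 := thetaThree_pos ht
  have h2' := thetaTwo_pos ht2
  have h3' := thetaThree_pos ht2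
  have d0 := (hasDerivAt_thetaTwo_div_thetaThree ht).pow 2
  have d1 : HasDerivAt (fun t ↦ thetaTwo (2 * t) / thetaThree (2 * t)) _ t :=
    (hasDerivAt_thetaTwo_div_thetaThree ht2).comp t ((hasDerivAt_id t).const_mul 2)
  have hr : 0 < thetaTwo (2 * t) / thetaThree (2 * t) := by positivity
  have d2 := (d1.const_mul 2).div ((d1.pow 2).const_add 1)
    (by simp only [Pi.pow_apply]; positivity)
  have e : (fun t ↦ (thetaTwo t / thetaThree t) ^ 2) =ᶠ[𝓝 t]
      fun t ↦ 2 * (thetaTwo (2 * t) / thetaThree (2 * t)) /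
        (1 + (thetaTwo (2 * t) / thetaThree (2 * t)) ^ 2) := by
    filter_upwards [lt_mem_nhds ht] with s hs
    have := thetaThree_pos (t := 2 * s) (by positivity)
    have := thetaTwo_pos (t := 2 * s) (by positivity)
    rw [div_pow, thetaTwo_sq hs, thetaThree_sq hs]
    field_simp
  have key := d0.unique (d2.congr_of_eventuallyEq e)
  have hk := e.eq_of_nhds
  have e2 : thetaTwo (2 * t) = thetaTwo (2 * t) / thetaThree (2 * t) * thetaThree (2 * t) := by
    field_simp
  rw [thetaFour_sq ht, thetaThree_sq ht, e2]
  simp only [Pi.pow_apply, Nat.cast_ofNat, Nat.add_one_sub_one, pow_one] at key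
  generalize logDeriv thetaTwo (2 * t) - logDeriv thetaThree (2 * t) = A at *
  generalize logDeriv thetaTwo t - logDeriv thetaThree t = B at *
  generalize thetaTwo (2 * t) / thetaThree (2 * t) = r at *
  generalize thetaTwo t / thetaThree t = x at *
  rw [show 2 * x * (x * B) = 2 * B * x ^ 2 by ring, hk] at key
  field_simp at key
  linear_combination -thetaThree (2 * t) ^ 2 * key

lemma logDeriv_thetaTwo_sub_logDeriv_thetaThree (ht : 0 < t) :
    logDeriv thetaTwo t - logDeriv thetaThree t = -(π / 4) * thetaFour t ^ 4 := by
  have h4 := thetaFour_pos ht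
  rw [← div_eq_iff (by positivity)]
  refine eq_of_comp_two_mul_eq (f := fun t ↦
    (logDeriv thetaTwo t - logDeriv thetaThree t) / thetaFour t ^ 4) (fun t ht ↦ ?_) ?_ ht
  · have h3 := thetaThree_pos ht
    have h4 := thetaFour_pos ht
    have h4' := thetaFour_pos (t := 2 * t) (by positivity)
    rw [div_eq_div_iff (by positivity) (by positivity)]
    have e : thetaFour (2 * t) ^ 4 = (thetaThree t * thetaFour t) ^ 2 := by
      rw [← thetaFour_two_mul_sq ht]; ring
    rw [e]
    linear_combination thetaFour t ^ 2 * logDeriv_thetaTwo_sub_logDeriv_thetaThree_two_mul ht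
  · have h := (tendsto_logDeriv_thetaTwo.sub tendsto_logDeriv_thetaThree).div
      (tendsto_thetaFour.pow 4) (by norm_num)
    rwa [sub_zero, one_pow, div_one] at h

/-- The elliptic modulus `k` as a function of `t`. -/
noncomputable def thetaModulus (t : ℝ) : ℝ := (thetaTwo t / thetaThree t) ^ 2

lemma hasDerivAt_thetaModulus (ht : 0 < t) :
    HasDerivAt thetaModulus (-(π / 2 * thetaModulus t * thetaFour t ^ 4)) t := by
  have h := (hasDerivAt_thetaTwo_div_thetaThree ht).pow 2
  rw [logDeriv_thetaTwo_sub_logDeriv_thetaThree ht] at h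
  refine h.congr_deriv ?_
  rw [thetaModulus]
  ring

lemma thetaModulus_pos (ht : 0 < t) : 0 < thetaModulus t := by
  have := thetaTwo_pos ht
  have := thetaThree_pos ht
  unfold thetaModulus
  positivity

lemma one_sub_thetaModulus_sq (ht : 0 < t) :
    1 - thetaModulus t ^ 2 = (thetaFour t / thetaThree t) ^ 4 := by
  have h3 := thetaThree_pos ht
  rw [thetaModulus, ← pow_mul, div_pow, div_pow, eq_div_iff (by positivity), sub_mul,
    div_mul_cancel₀ _ (by positivity)]
  linear_combination thetaThree_pow_four ht

lemma thetaModulus_lt_one (ht : 0 < t) : thetaModulus t < 1 := by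
  have h := one_sub_thetaModulus_sq ht
  have h3 := thetaThree_pos ht
  have h4 := thetaFour_pos ht
  have : 0 < (thetaFour t / thetaThree t) ^ 4 := by positivity
  nlinarith [thetaModulus_pos ht]

lemma tendsto_thetaModulus_atTop : Tendsto thetaModulus atTop (𝓝 0) := by
  have h := (tendsto_thetaTwo.div tendsto_thetaThree one_ne_zero).pow 2
  rwa [zero_div, zero_pow two_ne_zero] at h

lemma tendsto_thetaModulus_zero : Tendsto thetaModulus (𝓝[>] 0) (𝓝 1) := by
  have h := ((tendsto_thetaFour.div tendsto_thetaThree one_ne_zero).pow 2).comp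
    tendsto_inv_nhdsGT_zero
  simp only [div_one, one_pow] at h
  refine h.congr' ?_
  filter_upwards [self_mem_nhdsWithin] with t ht
  have ht' : 0 < t := ht
  have h3 := thetaThree_pos (t := 1 / t) (by positivity)
  rw [thetaModulus, thetaTwo_eq_thetaFour_inv ht', thetaThree_eq_thetaThree_inv ht']
  simp only [Function.comp, Pi.div_apply, one_div] at h3 ⊢
  have := Real.sqrt_pos.2 ht'
  field_simp

lemma strictAntiOn_thetaModulus : StrictAntiOn thetaModulus (Set.Ioi 0) := by
  refine strictAntiOn_of_deriv_neg (convex_Ioi 0)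
    (fun t ht ↦ (hasDerivAt_thetaModulus ht).continuousAt.continuousWithinAt) fun t ht ↦ ?_
  rw [interior_Ioi] at ht
  have h1 := thetaModulus_pos ht
  have h2 := thetaFour_pos ht
  rw [(hasDerivAt_thetaModulus ht).deriv, neg_lt_zero]
  positivity

lemma image_thetaModulus : thetaModulus '' Set.Ioi 0 = Set.Ioo 0 1 := by
  refine Set.Subset.antisymm ?_ fun k hk ↦ ?_
  · rintro _ ⟨t, ht, rfl⟩
    exact ⟨thetaModulus_pos ht, thetaModulus_lt_one ht⟩
  · obtain ⟨a, hka, ha⟩ := ((tendsto_thetaModulus_zero.eventually (lt_mem_nhds hk.2)).and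
      self_mem_nhdsWithin).exists
    obtain ⟨b, hkb, hb⟩ := ((tendsto_thetaModulus_atTop.eventually (gt_mem_nhds hk.1)).and
      (eventually_gt_atTop 0)).exists
    have hc : ContinuousOn thetaModulus (Set.Ioi 0) :=
      fun t ht ↦ (hasDerivAt_thetaModulus ht).continuousAt.continuousWithinAt
    exact isPreconnected_Ioi.intermediate_value hb ha hc ⟨hkb.le, hka.le⟩

end ThetaDerivatives

section Landen

open Set

variable {a b : ℝ}

/-- Gauss's form of the complete elliptic integral of the first kind. -/
noncomputable def gaussIntegral (a b : ℝ) : ℝ :=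
  ∫ x in Ioi (0 : ℝ), (√(x ^ 2 + a ^ 2) * √(x ^ 2 + b ^ 2))⁻¹

lemma hasDerivAt_landen (c : ℝ) {x : ℝ} (hx : 0 < x) :
    HasDerivAt (fun x ↦ (x - c / x) / 2) ((1 + c / x ^ 2) / 2) x := by
  have h := ((hasDerivAt_id x).sub ((hasDerivAt_inv hx.ne').const_mul c)).div_const 2
  refine (h.congr_deriv ?_).congr_of_eventuallyEq (.of_forall fun y ↦ ?_)
  · field_simp; ring
  · simp [div_eq_mul_inv]

lemma image_landen {c : ℝ} (hc : 0 < c) : (fun x ↦ (x - c / x) / 2) '' Ioi 0 = univ := by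
  rw [eq_univ_iff_forall]
  intro u
  have h1 : u ^ 2 < u ^ 2 + c := by linarith
  have h2 : 0 < u + √(u ^ 2 + c) := by
    have := Real.sqrt_lt_sqrt (sq_nonneg u) h1
    rw [Real.sqrt_sq_eq_abs] at this
    linarith [neg_abs_le u]
  have h3 : √(u ^ 2 + c) ^ 2 = u ^ 2 + c := Real.sq_sqrt (by positivity)
  refine ⟨u + √(u ^ 2 + c), h2, ?_⟩
  simp only
  field_simp
  linear_combination h3

/-- Landen's transformation. -/
lemma gaussIntegral_landen (ha : 0 < a) (hb : 0 < b) :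
    gaussIntegral ((a + b) / 2) √(a * b) = gaussIntegral a b := by
  have hab : 0 < a * b := mul_pos ha hb
  let h : ℝ → ℝ := fun u ↦ (√(u ^ 2 + ((a + b) / 2) ^ 2) * √(u ^ 2 + √(a * b) ^ 2))⁻¹
  have h1 : ∫ u, h u = 2 * gaussIntegral ((a + b) / 2) √(a * b) := by
    rw [gaussIntegral, ← integral_comp_abs]
    simp only [sq_abs, h]
  have hinj : InjOn (fun x ↦ (x - a * b / x) / 2) (Ioi 0) := by
    intro x hx y hy hxy
    have hx' : 0 < x := hx
    have hy' : 0 < y := hy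
    simp only at hxy
    field_simp at hxy
    have : (x - y) * (x * y + a * b) = 0 := by linear_combination hxy
    rcases mul_eq_zero.1 this with h | h
    · linarith
    · nlinarith [mul_pos hx' hy']
  have h2 := integral_image_eq_integral_abs_deriv_smul measurableSet_Ioi
    (fun x hx ↦ (hasDerivAt_landen (a * b) hx).hasDerivWithinAt) hinj h
  rw [image_landen hab, setIntegral_univ, h1] at h2
  have h3 : ∫ x in Ioi (0 : ℝ), |(1 + a * b / x ^ 2) / 2| • h ((x - a * b / x) / 2) =
      2 * gaussIntegral a b := by
    rw [gaussIntegral, ← integral_const_mul]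
    refine setIntegral_congr_fun measurableSet_Ioi fun x (hx : 0 < x) ↦ ?_
    have e1 : ((x - a * b / x) / 2) ^ 2 + ((a + b) / 2) ^ 2 =
        (x ^ 2 + a ^ 2) * (x ^ 2 + b ^ 2) / (2 * x) ^ 2 := by field_simp; ring
    have e2 : ((x - a * b / x) / 2) ^ 2 + √(a * b) ^ 2 = ((x ^ 2 + a * b) / (2 * x)) ^ 2 := by
      rw [Real.sq_sqrt hab.le]; field_simp; ring
    simp only [h, smul_eq_mul]
    rw [e1, e2, Real.sqrt_sq (by positivity), Real.sqrt_div' _ (by positivity),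
      Real.sqrt_sq (by positivity), Real.sqrt_mul (by positivity), abs_of_pos (by positivity)]
    have : 0 < √(x ^ 2 + a ^ 2) := Real.sqrt_pos.2 (by positivity)
    have : 0 < √(x ^ 2 + b ^ 2) := Real.sqrt_pos.2 (by positivity)
    field_simp
  linarith

lemma inv_sq_add_sq_eq (ha : 0 < a) (x : ℝ) :
    (x ^ 2 + a ^ 2)⁻¹ = (a ^ 2)⁻¹ * (1 + (a⁻¹ * x) ^ 2)⁻¹ := by
  rw [← mul_inv]
  congr 1
  field_simp
  ring

lemma integrable_inv_sq_add_sq (ha : 0 < a) : Integrable fun x : ℝ ↦ (x ^ 2 + a ^ 2)⁻¹ := by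
  simp_rw [inv_sq_add_sq_eq ha]
  exact (integrable_inv_one_add_sq.comp_mul_left' (inv_ne_zero ha.ne')).const_mul _

lemma integral_Ioi_inv_sq_add_sq (ha : 0 < a) :
    ∫ x in Ioi (0 : ℝ), (x ^ 2 + a ^ 2)⁻¹ = π / 2 / a := by
  simp_rw [inv_sq_add_sq_eq ha]
  rw [integral_const_mul, integral_comp_mul_left_Ioi (fun x : ℝ ↦ (1 + x ^ 2)⁻¹) 0 (inv_pos.2 ha),
    mul_zero, integral_Ioi_inv_one_add_sq]
  simp only [smul_eq_mul, inv_inv, Real.arctan_zero, sub_zero]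
  field_simp

lemma gaussIntegral_bounds (hb : 0 < b) (hba : b ≤ a) :
    π / 2 / a ≤ gaussIntegral a b ∧ gaussIntegral a b ≤ π / 2 / b := by
  have ha : 0 < a := hb.trans_le hba
  have hs (x : ℝ) {c : ℝ} (hc : 0 < c) : 0 < √(x ^ 2 + c ^ 2) := Real.sqrt_pos.2 (by positivity)
  have hm (x : ℝ) : √(x ^ 2 + b ^ 2) ≤ √(x ^ 2 + a ^ 2) := by gcongr
  have lower (x : ℝ) : (x ^ 2 + a ^ 2)⁻¹ ≤ (√(x ^ 2 + a ^ 2) * √(x ^ 2 + b ^ 2))⁻¹ := by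
    refine inv_anti₀ (mul_pos (hs x ha) (hs x hb)) ?_
    calc _ ≤ √(x ^ 2 + a ^ 2) * √(x ^ 2 + a ^ 2) := by gcongr
      _ = _ := Real.mul_self_sqrt (by positivity)
  have upper (x : ℝ) : (√(x ^ 2 + a ^ 2) * √(x ^ 2 + b ^ 2))⁻¹ ≤ (x ^ 2 + b ^ 2)⁻¹ := by
    refine inv_anti₀ (by positivity) ?_
    calc x ^ 2 + b ^ 2 = √(x ^ 2 + b ^ 2) * √(x ^ 2 + b ^ 2) :=
          (Real.mul_self_sqrt (by positivity)).symm
      _ ≤ _ := by gcongr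
  have hprod : Integrable fun x : ℝ ↦ (√(x ^ 2 + a ^ 2) * √(x ^ 2 + b ^ 2))⁻¹ := by
    refine (integrable_inv_sq_add_sq hb).mono' (by fun_prop) (.of_forall fun x ↦ ?_)
    rw [Real.norm_of_nonneg (by positivity)]
    exact upper x
  rw [← integral_Ioi_inv_sq_add_sq ha, ← integral_Ioi_inv_sq_add_sq hb]
  exact ⟨setIntegral_mono (integrable_inv_sq_add_sq ha).integrableOn hprod.integrableOn lower,
    setIntegral_mono hprod.integrableOn (integrable_inv_sq_add_sq hb).integrableOn upper⟩

lemma hasDerivAt_div_sqrt_sq_add_sq (hb : 0 < b) (y : ℝ) :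
    HasDerivAt (fun y ↦ y / √(y ^ 2 + b ^ 2)) (b ^ 2 / √(y ^ 2 + b ^ 2) ^ 3) y := by
  have hp : 0 < y ^ 2 + b ^ 2 := by positivity
  have hs : 0 < √(y ^ 2 + b ^ 2) := Real.sqrt_pos.2 hp
  have h := (hasDerivAt_id y).div ((((hasDerivAt_id y).pow 2).add_const (b ^ 2)).sqrt hp.ne')
    hs.ne'
  refine h.congr_deriv ?_
  simp only [id, Pi.pow_apply]
  field_simp
  rw [Real.sq_sqrt hp.le]
  push_cast
  ring

lemma image_div_sqrt_sq_add_sq (hb : 0 < b) :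
    (fun y ↦ y / √(y ^ 2 + b ^ 2)) '' Ioi 0 = Ioo 0 1 := by
  refine Subset.antisymm ?_ fun x hx ↦ ?_
  · rintro _ ⟨y, hy, rfl⟩
    have hy' : 0 < y := hy
    have hs : 0 < √(y ^ 2 + b ^ 2) := Real.sqrt_pos.2 (by positivity)
    refine ⟨by positivity, (div_lt_one hs).2 (Real.lt_sqrt_of_sq_lt ?_)⟩
    nlinarith
  · have hx1 : 0 < 1 - x ^ 2 := by nlinarith [hx.1, hx.2]
    have hs : 0 < √(1 - x ^ 2) := Real.sqrt_pos.2 hx1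
    have hx0 := hx.1
    refine ⟨b * x / √(1 - x ^ 2), by simp only [mem_Ioi]; positivity, ?_⟩
    have e : (b * x / √(1 - x ^ 2)) ^ 2 + b ^ 2 = (b / √(1 - x ^ 2)) ^ 2 := by
      rw [div_pow, div_pow, Real.sq_sqrt hx1.le]
      field_simp
      ring
    simp only
    rw [e, Real.sqrt_sq (by positivity)]
    field_simp

lemma ellK_eq_mul_gaussIntegral (ha : 0 < a) (hb : 0 < b) {k : ℝ}
    (hk : 1 - k ^ 2 = (b / a) ^ 2) : EllK k = a * gaussIntegral a b := by
  have hinj : InjOn (fun y ↦ y / √(y ^ 2 + b ^ 2)) (Ioi 0) := by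
    refine (strictMono_of_hasDerivAt_pos (hasDerivAt_div_sqrt_sq_add_sq hb)
      fun y ↦ ?_).injective.injOn
    have hs : 0 < √(y ^ 2 + b ^ 2) := Real.sqrt_pos.2 (by positivity)
    positivity
  have h := integral_image_eq_integral_abs_deriv_smul measurableSet_Ioi
    (fun y _ ↦ (hasDerivAt_div_sqrt_sq_add_sq hb y).hasDerivWithinAt) hinj
    fun x ↦ 1 / √((1 - x ^ 2) * (1 - k ^ 2 * x ^ 2))
  rw [image_div_sqrt_sq_add_sq hb] at h
  rw [EllK, intervalIntegral.integral_of_le zero_le_one, integral_Ioc_eq_integral_Ioo, h,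
    gaussIntegral, ← integral_const_mul]
  refine setIntegral_congr_fun measurableSet_Ioi fun y (hy : 0 < y) ↦ ?_
  have hp : 0 < y ^ 2 + b ^ 2 := by positivity
  have hs : 0 < √(y ^ 2 + b ^ 2) := Real.sqrt_pos.2 hp
  have hs' : 0 < √(y ^ 2 + a ^ 2) := Real.sqrt_pos.2 (by positivity)
  have e : (1 - (y / √(y ^ 2 + b ^ 2)) ^ 2) * (1 - k ^ 2 * (y / √(y ^ 2 + b ^ 2)) ^ 2) =
      (b ^ 2 / (a * √(y ^ 2 + b ^ 2) ^ 2)) ^ 2 * (y ^ 2 + a ^ 2) := by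
    rw [show k ^ 2 = 1 - (b / a) ^ 2 by linarith, div_pow y, Real.sq_sqrt hp.le]
    field_simp
    ring
  simp only [smul_eq_mul]
  rw [e, Real.sqrt_mul (by positivity), Real.sqrt_sq (by positivity), abs_of_pos (by positivity)]
  field_simp

end Landen

section ThetaModulus

open Filter Topology

variable {t : ℝ}

lemma gaussIntegral_theta (ht : 0 < t) :
    gaussIntegral (thetaThree t ^ 2) (thetaFour t ^ 2) = π / 2 := by
  refine eq_of_comp_two_mul_eq
    (f := fun t ↦ gaussIntegral (thetaThree t ^ 2) (thetaFour t ^ 2)) (fun t ht ↦ ?_) ?_ ht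
  · have h3 := thetaThree_pos ht
    have h4 := thetaFour_pos ht
    have e : √(thetaThree t ^ 2 * thetaFour t ^ 2) = thetaFour (2 * t) ^ 2 := by
      rw [thetaFour_two_mul_sq ht, ← mul_pow, Real.sqrt_sq (by positivity)]
    rw [← gaussIntegral_landen (sq_pos_of_pos h3) (sq_pos_of_pos h4), e,
      thetaThree_sq_add_thetaFour_sq ht, mul_div_cancel_left₀ _ two_ne_zero]
  · have hb : ∀ᶠ t in atTop,
        π / 2 / thetaThree t ^ 2 ≤ gaussIntegral (thetaThree t ^ 2) (thetaFour t ^ 2) ∧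
        gaussIntegral (thetaThree t ^ 2) (thetaFour t ^ 2) ≤ π / 2 / thetaFour t ^ 2 := by
      filter_upwards [eventually_gt_atTop 0] with t ht
      refine gaussIntegral_bounds (sq_pos_of_pos (thetaFour_pos ht)) ?_
      rw [thetaFour_sq ht, thetaThree_sq ht]
      linarith [sq_nonneg (thetaTwo (2 * t))]
    have h3 := (tendsto_const_nhds (x := π / 2)).div (tendsto_thetaThree.pow 2) (by norm_num)
    have h4 := (tendsto_const_nhds (x := π / 2)).div (tendsto_thetaFour.pow 2) (by norm_num)
    rw [one_pow, div_one] at h3 h4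
    exact tendsto_of_tendsto_of_tendsto_of_le_of_le' h3 h4 (hb.mono fun _ h ↦ h.1)
      (hb.mono fun _ h ↦ h.2)

lemma ellK_thetaModulus (ht : 0 < t) : EllK (thetaModulus t) = π / 2 * thetaThree t ^ 2 := by
  rw [ellK_eq_mul_gaussIntegral (sq_pos_of_pos (thetaThree_pos ht))
    (sq_pos_of_pos (thetaFour_pos ht)), gaussIntegral_theta ht, mul_comm]
  rw [one_sub_thetaModulus_sq ht]
  ring

lemma integral_eq_integral_thetaTwo_mul_thetaFour :
    ∫ k in (0:ℝ)..(1:ℝ), 1 / (k ^ ((1:ℝ)/2) * (1 - k^2) ^ ((3:ℝ)/4) * EllK k) =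
      ∫ t in Set.Ioi (0 : ℝ), thetaTwo t * thetaFour t := by
  have h := integral_image_eq_integral_abs_deriv_smul measurableSet_Ioi
    (fun t ht ↦ (hasDerivAt_thetaModulus ht).hasDerivWithinAt) strictAntiOn_thetaModulus.injOn
    fun k ↦ 1 / (k ^ ((1:ℝ)/2) * (1 - k^2) ^ ((3:ℝ)/4) * EllK k)
  rw [image_thetaModulus] at h
  rw [intervalIntegral.integral_of_le zero_le_one, integral_Ioc_eq_integral_Ioo, h]
  refine setIntegral_congr_fun measurableSet_Ioi fun t (ht : 0 < t) ↦ ?_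
  have h2 := thetaTwo_pos ht
  have h3 := thetaThree_pos ht
  have h4 := thetaFour_pos ht
  have e1 : thetaModulus t ^ ((1:ℝ)/2) = thetaTwo t / thetaThree t := by
    rw [← Real.sqrt_eq_rpow, thetaModulus, Real.sqrt_sq (by positivity)]
  have e2 : (1 - thetaModulus t ^ 2) ^ ((3:ℝ)/4) = (thetaFour t / thetaThree t) ^ 3 := by
    rw [one_sub_thetaModulus_sq ht, ← Real.rpow_natCast, ← Real.rpow_natCast,
      ← Real.rpow_mul (by positivity)]
    norm_num
  simp only [smul_eq_mul]
  rw [e1, e2, ellK_thetaModulus ht, abs_neg, thetaModulus, abs_of_pos (by positivity)]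
  field_simp

end ThetaModulus

section TripleProduct

open Filter Topology

variable {q : ℝ}

/-- The `q`-Pochhammer symbol `(q² ; q²)_N`. -/
noncomputable def qPochhammer (q : ℝ) (N : ℕ) : ℝ := ∏ i ∈ Finset.range N, (1 - q ^ (2 * (i + 1)))

/-- The inverse of `(q² ; q²)_m`, extended by zero to negative `m`. -/
noncomputable def invQPochhammer (q : ℝ) (m : ℤ) : ℝ :=
  if 0 ≤ m then (qPochhammer q m.toNat)⁻¹ else 0

lemma one_sub_pow_pos (hq : 0 < q) (hq1 : q < 1) (i : ℕ) : 0 < 1 - q ^ (2 * (i + 1)) :=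
  sub_pos.2 (pow_lt_one₀ hq.le hq1 (by positivity))

lemma qPochhammer_pos (hq : 0 < q) (hq1 : q < 1) (N : ℕ) : 0 < qPochhammer q N :=
  Finset.prod_pos fun i _ ↦ one_sub_pow_pos hq hq1 i

lemma qPochhammer_succ (q : ℝ) (N : ℕ) :
    qPochhammer q (N + 1) = qPochhammer q N * (1 - q ^ (2 * (N + 1))) :=
  Finset.prod_range_succ _ _

lemma invQPochhammer_nonneg (hq : 0 < q) (hq1 : q < 1) (m : ℤ) : 0 ≤ invQPochhammer q m := by
  unfold invQPochhammer
  split_ifs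
  · exact (inv_pos.2 (qPochhammer_pos hq hq1 _)).le
  · exact le_rfl

lemma invQPochhammer_sub_one (hq : 0 < q) (hq1 : q < 1) (m : ℤ) :
    invQPochhammer q (m - 1) = (1 - q ^ (2 * m)) * invQPochhammer q m := by
  rcases lt_trichotomy m 0 with hm | rfl | hm
  · rw [invQPochhammer, invQPochhammer, if_neg (by omega), if_neg (by omega), mul_zero]
  · simp [invQPochhammer]
  · obtain ⟨n, rfl⟩ : ∃ n : ℕ, m = n + 1 := ⟨(m - 1).toNat, by omega⟩
    rw [invQPochhammer, invQPochhammer, if_pos (by omega), if_pos (by omega),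
      show ((n : ℤ) + 1 - 1).toNat = n by omega, show ((n : ℤ) + 1).toNat = n + 1 by omega,
      qPochhammer_succ, show q ^ (2 * ((n : ℤ) + 1)) = q ^ (2 * (n + 1)) by norm_cast]
    have := (one_sub_pow_pos hq hq1 n).ne'
    have := (qPochhammer_pos hq hq1 n).ne'
    field_simp

lemma exists_tendsto_qPochhammer (hq : 0 < q) (hq1 : q < 1) :
    ∃ L, 0 < L ∧ Tendsto (qPochhammer q) atTop (𝓝 L) := by
  have hs : Summable fun i : ℕ ↦ -q ^ (2 * (i + 1)) := by
    refine (Summable.of_nonneg_of_le (fun i ↦ by positivity) (fun i ↦ ?_)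
      (summable_geometric_of_lt_one hq.le hq1)).neg
    exact pow_le_pow_of_le_one hq.le hq1.le (by omega)
  refine ⟨_, Real.exp_pos _, ((Real.continuous_exp.tendsto _).comp
    (Real.summable_log_one_add_of_summable hs).hasSum.tendsto_sum_nat).congr fun N ↦ ?_⟩
  rw [Function.comp, Real.exp_sum, qPochhammer]
  refine Finset.prod_congr rfl fun i _ ↦ ?_
  rw [← sub_eq_add_neg, Real.exp_log (one_sub_pow_pos hq hq1 i)]

lemma exists_tendsto_invQPochhammer (hq : 0 < q) (hq1 : q < 1) :
    ∃ W, 0 < W ∧ Tendsto (invQPochhammer q) atTop (𝓝 W) ∧ ∀ m, invQPochhammer q m ≤ W := by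
  obtain ⟨L, hL, h⟩ := exists_tendsto_qPochhammer hq hq1
  have hanti : Antitone (qPochhammer q) := antitone_nat_of_succ_le fun N ↦ by
    rw [qPochhammer_succ]
    refine mul_le_of_le_one_right (qPochhammer_pos hq hq1 N).le ?_
    linarith [pow_pos hq (2 * (N + 1))]
  refine ⟨L⁻¹, inv_pos.2 hL, ?_, fun m ↦ ?_⟩
  · have ht : Tendsto Int.toNat atTop atTop :=
      tendsto_atTop.2 fun b ↦ (eventually_ge_atTop (b : ℤ)).mono fun m hm ↦ by omega
    refine ((h.comp ht).inv₀ hL.ne').congr' ?_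
    filter_upwards [eventually_ge_atTop 0] with m hm
    rw [invQPochhammer, if_pos hm, Function.comp]
  · unfold invQPochhammer
    split_ifs
    · exact inv_anti₀ hL (hanti.le_of_tendsto h _)
    · exact (inv_pos.2 hL).le

/-- The finite form of the Jacobi triple product at `z = s` with `s = ±1`. -/
lemma hasSum_finite_triple_product (hq : 0 < q) (hq1 : q < 1) {s : ℝ} (hs : s * s = 1) (N : ℕ) :
    HasSum (fun n : ℤ ↦ s ^ n * q ^ n ^ 2 * (invQPochhammer q (N - n) * invQPochhammer q (N + n)))
      ((∏ j ∈ Finset.range N, (1 + s * q ^ (2 * j + 1)) ^ 2) / qPochhammer q (2 * N)) := by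
  have hs0 : s ≠ 0 := by rintro rfl; simp at hs
  induction N with
  | zero =>
    have h1 (m : ℤ) (hm : m < 0) : invQPochhammer q m = 0 := if_neg (by omega)
    have h := hasSum_single (f := fun n : ℤ ↦ s ^ n * q ^ n ^ 2 *
      (invQPochhammer q ((0 : ℕ) - n) * invQPochhammer q ((0 : ℕ) + n))) 0 fun n hn ↦ ?_
    · simpa [invQPochhammer, qPochhammer] using h
    · rcases lt_or_gt_of_ne hn with h | h
      · rw [h1 ((0 : ℕ) + n) (by simpa using h), mul_zero, mul_zero]
      · rw [h1 ((0 : ℕ) - n) (by simpa using h), zero_mul, mul_zero]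
  | succ N ih =>
    have hup := (Equiv.addRight (1 : ℤ)).hasSum_iff.2 ih
    have hdown := (Equiv.subRight (1 : ℤ)).hasSum_iff.2 ih
    have h := ((ih.mul_left (1 + q ^ (4 * N + 2))).add
      ((hdown.add hup).mul_left (s * q ^ (2 * N + 1)))).div_const
      ((1 - q ^ (2 * (2 * N + 1))) * (1 - q ^ (2 * (2 * N + 1 + 1))))
    have p1 := one_sub_pow_pos hq hq1 (2 * N)
    have p2 := one_sub_pow_pos hq hq1 (2 * N + 1)
    have p3 := qPochhammer_pos hq hq1 (2 * N)
    have hv : ((1 + q ^ (4 * N + 2)) * ((∏ j ∈ Finset.range N, (1 + s * q ^ (2 * j + 1)) ^ 2) /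
        qPochhammer q (2 * N)) + s * q ^ (2 * N + 1) *
        ((∏ j ∈ Finset.range N, (1 + s * q ^ (2 * j + 1)) ^ 2) / qPochhammer q (2 * N) +
          (∏ j ∈ Finset.range N, (1 + s * q ^ (2 * j + 1)) ^ 2) / qPochhammer q (2 * N))) /
        ((1 - q ^ (2 * (2 * N + 1))) * (1 - q ^ (2 * (2 * N + 1 + 1)))) =
        (∏ j ∈ Finset.range (N + 1), (1 + s * q ^ (2 * j + 1)) ^ 2) /
          qPochhammer q (2 * (N + 1)) := by
      rw [show 2 * (N + 1) = 2 * N + 1 + 1 by ring, qPochhammer_succ, qPochhammer_succ,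
        Finset.prod_range_succ, show 4 * N + 2 = (2 * N + 1) * 2 by ring, pow_mul]
      generalize ∏ j ∈ Finset.range N, (1 + s * q ^ (2 * j + 1)) ^ 2 = P
      generalize q ^ (2 * N + 1) = r
      field_simp
      linear_combination -r ^ 2 * P * hs
    rw [hv] at h
    refine Eq.subst (motive := (HasSum · _)) (funext fun n ↦ ?_) h
    · rw [div_eq_iff (by positivity)]
      simp only [Function.comp, Equiv.coe_addRight, Equiv.subRight_apply]
      have r1 := invQPochhammer_sub_one hq hq1 (N + 1 - n)
      have r2 := invQPochhammer_sub_one hq hq1 (N + 1 + n)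
      have r3 := invQPochhammer_sub_one hq hq1 (N - n)
      have r4 := invQPochhammer_sub_one hq hq1 (N + n)
      rw [show (N : ℤ) + 1 - n - 1 = N - n by ring] at r1
      rw [show (N : ℤ) + 1 + n - 1 = N + n by ring] at r2
      rw [show ((N + 1 : ℕ) : ℤ) - n = N + 1 - n by push_cast; ring,
        show ((N + 1 : ℕ) : ℤ) + n = N + 1 + n by push_cast; ring,
        show (N : ℤ) - (n - 1) = N + 1 - n by ring, show (N : ℤ) + (n - 1) = N + n - 1 by ring,
        show (N : ℤ) - (n + 1) = N - n - 1 by ring, show (N : ℤ) + (n + 1) = N + 1 + n by ring,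
        r3, r4, r1, r2]
      generalize invQPochhammer q (N + 1 - n) = u
      generalize invQPochhammer q (N + 1 + n) = v
      have s1 : s ^ (n - 1) = s ^ n * s := by
        rw [zpow_sub_one₀ hs0, inv_eq_of_mul_eq_one_right hs]
      have s2 : s ^ (n + 1) = s ^ n * s := zpow_add_one₀ hs0 n
      have q1 : q ^ (n - 1) ^ 2 = q ^ n ^ 2 * (q * (q ^ n)⁻¹ ^ 2) := by
        rw [show (n - 1) ^ 2 = n ^ 2 + (1 + -n * (2 : ℕ)) by push_cast; ring,
          zpow_add₀ hq.ne', zpow_add₀ hq.ne', zpow_one, zpow_mul, zpow_natCast, zpow_neg]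
      have q2 : q ^ (n + 1) ^ 2 = q ^ n ^ 2 * (q * (q ^ n) ^ 2) := by
        rw [show (n + 1) ^ 2 = n ^ 2 + (1 + n * (2 : ℕ)) by push_cast; ring,
          zpow_add₀ hq.ne', zpow_add₀ hq.ne', zpow_one, zpow_mul, zpow_natCast]
      have q3 : q ^ (2 * ((N : ℤ) + 1 - n)) = (q ^ N) ^ 2 * q ^ 2 * (q ^ n)⁻¹ ^ 2 := by
        rw [show 2 * ((N : ℤ) + 1 - n) = N * (2 : ℕ) + ((2 : ℕ) + -n * (2 : ℕ)) by push_cast; ring,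
          zpow_add₀ hq.ne', zpow_add₀ hq.ne', zpow_mul, zpow_mul, zpow_neg]
        simp only [zpow_natCast]; ring
      have q4 : q ^ (2 * ((N : ℤ) + 1 + n)) = (q ^ N) ^ 2 * q ^ 2 * (q ^ n) ^ 2 := by
        rw [show 2 * ((N : ℤ) + 1 + n) = N * (2 : ℕ) + ((2 : ℕ) + n * (2 : ℕ)) by push_cast; ring,
          zpow_add₀ hq.ne', zpow_add₀ hq.ne', zpow_mul, zpow_mul]
        simp only [zpow_natCast]; ring
      have q5 : q ^ (2 * ((N : ℤ) - n)) = (q ^ N) ^ 2 * (q ^ n)⁻¹ ^ 2 := by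
        rw [show 2 * ((N : ℤ) - n) = N * (2 : ℕ) + -n * (2 : ℕ) by push_cast; ring,
          zpow_add₀ hq.ne', zpow_mul, zpow_mul, zpow_neg]
        simp only [zpow_natCast]
      have q6 : q ^ (2 * ((N : ℤ) + n)) = (q ^ N) ^ 2 * (q ^ n) ^ 2 := by
        rw [show 2 * ((N : ℤ) + n) = N * (2 : ℕ) + n * (2 : ℕ) by push_cast; ring,
          zpow_add₀ hq.ne', zpow_mul, zpow_mul]
        simp only [zpow_natCast]
      have hqn : q ^ n * (q ^ n)⁻¹ = 1 := mul_inv_cancel₀ (zpow_ne_zero n hq.ne')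
      rw [s1, s2, q1, q2, q3, q4, q5, q6]
      rw [show 4 * N + 2 = N * 4 + 2 by ring, show 2 * N + 1 = N * 2 + 1 by ring,
        show 2 * (N * 2 + 1) = N * 4 + 2 by ring, show 2 * (N * 2 + 1 + 1) = N * 4 + 4 by ring]
      simp only [pow_add, pow_mul q N, pow_one]
      generalize q ^ n ^ 2 = G
      generalize s ^ n = S
      generalize q ^ N = p
      generalize (q ^ n)⁻¹ = y at *
      generalize q ^ n = x at *
      have hx0 : x ≠ 0 := left_ne_zero_of_mul_eq_one hqn
      have key : (1 + p ^ 4 * q ^ 2) * ((1 - p ^ 2 * q ^ 2 * y ^ 2) * (1 - p ^ 2 * q ^ 2 * x ^ 2)) +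
          p ^ 2 * q ^ 2 * (y ^ 2 * ((1 - p ^ 2 * x ^ 2) * (1 - p ^ 2 * q ^ 2 * x ^ 2)) +
            x ^ 2 * ((1 - p ^ 2 * y ^ 2) * (1 - p ^ 2 * q ^ 2 * y ^ 2))) =
          (1 - p ^ 4 * q ^ 2) * (1 - p ^ 4 * q ^ 4) := by
        rw [eq_inv_of_mul_eq_one_right hqn]
        field_simp
        ring
      linear_combination (S * G * u * v) * key + (p ^ 2 * q ^ 2 * S * G * u * v *
        (y ^ 2 * ((1 - p ^ 2 * x ^ 2) * (1 - p ^ 2 * q ^ 2 * x ^ 2)) +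
          x ^ 2 * ((1 - p ^ 2 * y ^ 2) * (1 - p ^ 2 * q ^ 2 * y ^ 2)))) * hs

end TripleProduct

section TripleProductLimit

open Filter Topology

variable {t : ℝ}

lemma exp_neg_pi_mul_zpow_sq (t : ℝ) (n : ℤ) :
    Real.exp (-π * t) ^ n ^ 2 = Real.exp (-π * n ^ 2 * t) := by
  rw [← Real.rpow_intCast, ← Real.exp_mul]
  push_cast
  ring_nf

/-- The product over `j < N` of `((1 + q ^ (2 j + 1)) / (1 - q ^ (2 j + 1)))²`, where
`q = exp (-π t)`, tends to `θ₃ / θ₄`. -/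
lemma tendsto_prod_div_prod (ht : 0 < t) :
    Tendsto (fun N ↦ (∏ j ∈ Finset.range N, (1 + Real.exp (-π * t) ^ (2 * j + 1)) ^ 2) /
      ∏ j ∈ Finset.range N, (1 - Real.exp (-π * t) ^ (2 * j + 1)) ^ 2) atTop
      (𝓝 (thetaThree t / thetaFour t)) := by
  set q := Real.exp (-π * t) with hqdef
  have hq : 0 < q := Real.exp_pos _
  have hq1 : q < 1 := Real.exp_lt_one_iff.2 (by nlinarith [Real.pi_pos])
  obtain ⟨W, hW, hlim, hle⟩ := exists_tendsto_invQPochhammer hq hq1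
  have main {s : ℝ} (hs : s * s = 1) :
      Tendsto (fun N : ℕ ↦ (∏ j ∈ Finset.range N, (1 + s * q ^ (2 * j + 1)) ^ 2) /
        qPochhammer q (2 * N)) atTop (𝓝 (∑' n : ℤ, s ^ n * q ^ n ^ 2 * (W * W))) := by
    have habs : |s| = 1 := by
      rw [← sq_eq_sq₀ (abs_nonneg s) zero_le_one, sq_abs, sq, hs, one_pow]
    have h : Tendsto (fun N : ℕ ↦ ∑' n : ℤ, s ^ n * q ^ n ^ 2 *
        (invQPochhammer q (N - n) * invQPochhammer q (N + n))) atTop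
        (𝓝 (∑' n : ℤ, s ^ n * q ^ n ^ 2 * (W * W))) := by
      refine tendsto_tsum_of_dominated_convergence (bound := fun n : ℤ ↦ q ^ n ^ 2 * (W * W))
        ?_ (fun n ↦ ?_) (Eventually.of_forall fun N n ↦ ?_)
      · simp only [hqdef, exp_neg_pi_mul_zpow_sq]
        exact (hasSum_thetaThree ht).summable.mul_right _
      · have h1 : Tendsto (fun N : ℕ ↦ (N : ℤ) - n) atTop atTop :=
          tendsto_atTop_add_const_right _ (-n) tendsto_natCast_atTop_atTop
        have h2 : Tendsto (fun N : ℕ ↦ (N : ℤ) + n) atTop atTop :=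
          tendsto_atTop_add_const_right _ n tendsto_natCast_atTop_atTop
        exact ((hlim.comp h1).mul (hlim.comp h2)).const_mul _
      · have h0 := invQPochhammer_nonneg hq hq1
        rw [Real.norm_eq_abs, abs_mul, abs_mul, abs_zpow, habs, one_zpow, one_mul,
          abs_of_pos (zpow_pos hq _), abs_of_nonneg (mul_nonneg (h0 _) (h0 _))]
        exact mul_le_mul_of_nonneg_left (mul_le_mul (hle _) (hle _) (h0 _) hW.le)
          (zpow_pos hq _).le
    exact h.congr fun N ↦ (hasSum_finite_triple_product hq hq1 hs N).tsum_eq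
  have e3 : ∑' n : ℤ, (1 : ℝ) ^ n * q ^ n ^ 2 * (W * W) = thetaThree t * (W * W) := by
    simp only [one_zpow, one_mul, hqdef, exp_neg_pi_mul_zpow_sq]
    exact tsum_mul_right
  have e4 : ∑' n : ℤ, (-1 : ℝ) ^ n * q ^ n ^ 2 * (W * W) = thetaFour t * (W * W) := by
    simp only [hqdef, exp_neg_pi_mul_zpow_sq]
    exact tsum_mul_right
  have m3 := main (s := 1) (by norm_num)
  have m4 := main (s := -1) (by norm_num)
  rw [e3] at m3
  rw [e4] at m4
  have h4 := thetaFour_pos ht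
  have h := m3.div m4 (by positivity)
  rw [mul_div_mul_right _ _ (by positivity : W * W ≠ 0)] at h
  refine h.congr fun N ↦ ?_
  simp only [Pi.div_apply, one_mul, neg_one_mul, ← sub_eq_add_neg]
  rw [div_div_div_cancel_right₀ (qPochhammer_pos hq hq1 _).ne']

end TripleProductLimit

section GaussianBessel

open Filter Topology Set

variable {a b : ℝ}

/-- The primitive of `exp (-π s²)` vanishing at the origin. -/
noncomputable def gaussPrimitive (x : ℝ) : ℝ := ∫ s in (0 : ℝ)..x, Real.exp (-π * s ^ 2)

lemma hasDerivAt_gaussPrimitive (x : ℝ) :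
    HasDerivAt gaussPrimitive (Real.exp (-π * x ^ 2)) x :=
  (by fun_prop : Continuous fun s : ℝ ↦ Real.exp (-π * s ^ 2)).integral_hasStrictDerivAt 0 x
    |>.hasDerivAt

lemma tendsto_gaussPrimitive_atTop : Tendsto gaussPrimitive atTop (𝓝 (1 / 2)) := by
  have h := intervalIntegral_tendsto_integral_Ioi 0
    (integrable_exp_neg_mul_sq Real.pi_pos).integrableOn tendsto_id
  rwa [integral_gaussian_Ioi, div_self Real.pi_ne_zero, Real.sqrt_one] at h

lemma gaussPrimitive_neg (x : ℝ) : gaussPrimitive (-x) = -gaussPrimitive x := by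
  have h := intervalIntegral.integral_comp_neg (a := 0) (b := x)
    (fun s : ℝ ↦ Real.exp (-π * s ^ 2))
  simp only [neg_sq, neg_zero] at h
  rw [gaussPrimitive, gaussPrimitive, h, intervalIntegral.integral_symm]

lemma tendsto_gaussPrimitive_atBot : Tendsto gaussPrimitive atBot (𝓝 (-(1 / 2))) := by
  refine (tendsto_gaussPrimitive_atTop.comp tendsto_neg_atBot_atTop).neg.congr fun x ↦ ?_
  rw [Function.comp, gaussPrimitive_neg, neg_neg]

lemma exp_mul_gauss (a b : ℝ) {t : ℝ} (ht : 0 < t) :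
    Real.exp (2 * π * a * b) * Real.exp (-π * (a * √t + b * (√t)⁻¹) ^ 2) =
      Real.exp (-π * a ^ 2 * t) * Real.exp (-π * b ^ 2 * (1 / t)) := by
  have h := Real.sq_sqrt ht.le
  have hs := Real.sqrt_pos.2 ht
  rw [← Real.exp_add, ← Real.exp_add]
  congr 1
  rw [← h, Real.sqrt_sq hs.le]
  field_simp
  ring

lemma hasDerivAt_gaussPrimitive_comp (a b : ℝ) {t : ℝ} (ht : 0 < t) :
    HasDerivAt (fun t ↦ Real.exp (2 * π * a * b) * gaussPrimitive (a * √t + b * (√t)⁻¹))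
      (Real.exp (-π * a ^ 2 * t) * Real.exp (-π * b ^ 2 * (1 / t)) *
        (a * (1 / (2 * √t)) + b * (-(1 / (2 * √t)) / √t ^ 2))) t := by
  have hs := Real.hasDerivAt_sqrt ht.ne'
  have h := ((hasDerivAt_gaussPrimitive (a * √t + b * (√t)⁻¹)).comp t
    ((hs.const_mul a).add ((hs.inv (Real.sqrt_pos.2 ht).ne').const_mul b))).const_mul
    (Real.exp (2 * π * a * b))
  refine h.congr_deriv ?_
  rw [← exp_mul_gauss a b ht]
  ring

/-- An antiderivative of `exp (-π a² t) * exp (-π b² / t) / √t`, together with its limits. -/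
lemma exists_primitive_gauss_mul_gauss (ha : 0 < a) (hb : 0 < b) : ∃ g : ℝ → ℝ,
    ContinuousWithinAt g (Ici 0) 0 ∧
    (∀ t ∈ Ioi (0 : ℝ), HasDerivAt g
      (Real.exp (-π * a ^ 2 * t) * (1 / √t * Real.exp (-π * b ^ 2 * (1 / t)))) t) ∧
    Tendsto g atTop (𝓝 (Real.exp (-(2 * π * a * b)) / a + g 0)) := by
  let G (t : ℝ) : ℝ := 1 / a * (Real.exp (2 * π * a * b) * gaussPrimitive (a * √t + b * (√t)⁻¹) +
    Real.exp (2 * π * a * -b) * gaussPrimitive (a * √t + -b * (√t)⁻¹))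
  have hG (t : ℝ) (ht : 0 < t) : HasDerivAt G
      (Real.exp (-π * a ^ 2 * t) * (1 / √t * Real.exp (-π * b ^ 2 * (1 / t)))) t := by
    refine (((hasDerivAt_gaussPrimitive_comp a b ht).add
      (hasDerivAt_gaussPrimitive_comp a (-b) ht)).const_mul (1 / a)).congr_deriv ?_
    rw [neg_sq]
    field_simp
    ring
  have hlim {l : Filter ℝ} {A B : ℝ}
      (h1 : Tendsto (fun t ↦ gaussPrimitive (a * √t + b * (√t)⁻¹)) l (𝓝 A))
      (h2 : Tendsto (fun t ↦ gaussPrimitive (a * √t + -b * (√t)⁻¹)) l (𝓝 B)) :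
      Tendsto G l (𝓝 (1 / a * (Real.exp (2 * π * a * b) * A + Real.exp (2 * π * a * -b) * B))) :=
    ((h1.const_mul _).add (h2.const_mul _)).const_mul _
  have hinf (c : ℝ) : Tendsto (fun t ↦ a * √t + c * (√t)⁻¹) atTop atTop :=
    (Real.tendsto_sqrt_atTop.const_mul_atTop ha).atTop_add
      ((tendsto_inv_atTop_zero.comp Real.tendsto_sqrt_atTop).const_mul c)
  have htop := hlim (tendsto_gaussPrimitive_atTop.comp (hinf b))
    (tendsto_gaussPrimitive_atTop.comp (hinf (-b)))
  have hsqrt : Tendsto (fun t ↦ a * √t) (𝓝[>] 0) (𝓝 0) := by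
    have h : Tendsto (fun t ↦ a * √t) (𝓝 0) (𝓝 (a * √0)) :=
      (by fun_prop : Continuous fun t ↦ a * √t).tendsto 0
    rw [Real.sqrt_zero, mul_zero] at h
    exact h.mono_left nhdsWithin_le_nhds
  have hinv : Tendsto (fun t ↦ (√t)⁻¹) (𝓝[>] 0) atTop := by
    refine tendsto_inv_nhdsGT_zero.comp (tendsto_nhdsWithin_iff.2 ⟨?_, ?_⟩)
    · have h := Real.continuous_sqrt.tendsto 0
      rw [Real.sqrt_zero] at h
      exact h.mono_left nhdsWithin_le_nhds
    · filter_upwards [self_mem_nhdsWithin] with t ht using Real.sqrt_pos.2 ht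
  have hzero := hlim
    (tendsto_gaussPrimitive_atTop.comp (hsqrt.add_atTop (hinv.const_mul_atTop hb)))
    (tendsto_gaussPrimitive_atBot.comp
      (hsqrt.add_atBot (hinv.const_mul_atTop_of_neg (neg_neg_of_pos hb))))
  refine ⟨Function.update G 0 (1 / a * (Real.exp (2 * π * a * b) * (1 / 2) +
    Real.exp (2 * π * a * -b) * -(1 / 2))), ?_, fun t ht ↦ ?_, ?_⟩
  · rw [continuousWithinAt_update_same, Ici_sdiff_left]
    exact hzero
  · refine (hG t ht).congr_of_eventuallyEq ?_
    filter_upwards [lt_mem_nhds ht] with x hx using Function.update_of_ne hx.ne' _ _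
  · rw [Function.update_self]
    have e : Real.exp (-(2 * π * a * b)) / a +
        1 / a * (Real.exp (2 * π * a * b) * (1 / 2) + Real.exp (2 * π * a * -b) * -(1 / 2)) =
        1 / a * (Real.exp (2 * π * a * b) * (1 / 2) + Real.exp (2 * π * a * -b) * (1 / 2)) := by
      rw [mul_neg (2 * π * a)]
      ring
    rw [e]
    refine htop.congr' ?_
    filter_upwards [eventually_gt_atTop 0] with x hx using (Function.update_of_ne hx.ne' _ _).symm

lemma gauss_mul_gauss_nonneg (a b t : ℝ) :
    0 ≤ Real.exp (-π * a ^ 2 * t) * (1 / √t * Real.exp (-π * b ^ 2 * (1 / t))) := by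
  positivity

lemma integrableOn_gauss_mul_gauss (ha : 0 < a) (hb : 0 < b) :
    IntegrableOn (fun t ↦ Real.exp (-π * a ^ 2 * t) *
      (1 / √t * Real.exp (-π * b ^ 2 * (1 / t)))) (Ioi 0) := by
  obtain ⟨g, h0, hg, hinf⟩ := exists_primitive_gauss_mul_gauss ha hb
  exact integrableOn_Ioi_deriv_of_nonneg h0 hg (fun t _ ↦ gauss_mul_gauss_nonneg a b t) hinf

lemma integral_gauss_mul_gauss (ha : 0 < a) (hb : 0 < b) :
    ∫ t in Ioi (0 : ℝ), Real.exp (-π * a ^ 2 * t) *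
      (1 / √t * Real.exp (-π * b ^ 2 * (1 / t))) = Real.exp (-(2 * π * a * b)) / a := by
  obtain ⟨g, h0, hg, hinf⟩ := exists_primitive_gauss_mul_gauss ha hb
  rw [integral_Ioi_of_hasDerivAt_of_nonneg h0 hg (fun t _ ↦ gauss_mul_gauss_nonneg a b t) hinf,
    add_sub_cancel_right]

end GaussianBessel

section ThetaIntegral

open Filter Topology Set

variable {t : ℝ}

lemma hasSum_nat_thetaTwo (ht : 0 < t) :
    HasSum (fun n : ℕ ↦ 2 * Real.exp (-π * ((n : ℝ) + 1 / 2) ^ 2 * t)) (thetaTwo t) := by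
  refine Eq.subst (motive := (HasSum · _)) (funext fun n ↦ ?_)
    (hasSum_thetaTwo ht).nat_add_neg_add_one
  push_cast
  rw [two_mul]
  ring_nf

/-- The terms of the double series for `θ₂ θ₄` obtained from the inversion formula for `θ₄`. -/
noncomputable def thetaTerm (p : ℕ × ℕ) (t : ℝ) : ℝ :=
  4 * (Real.exp (-π * ((p.2 : ℝ) + 1 / 2) ^ 2 * t) *
    (1 / √t * Real.exp (-π * ((p.1 : ℝ) + 1 / 2) ^ 2 * (1 / t))))

lemma hasSum_thetaTerm (ht : 0 < t) :
    HasSum (fun p ↦ thetaTerm p t) (thetaTwo t * thetaFour t) := by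
  have h1 := hasSum_nat_thetaTwo ht
  have h2 := (hasSum_nat_thetaTwo (t := 1 / t) (by positivity)).mul_left (1 / √t)
  rw [← thetaFour_eq_thetaTwo_inv ht] at h2
  have h := h2.mul h1 (h2.summable.mul_of_nonneg h1.summable (fun n ↦ by positivity)
    fun n ↦ by positivity)
  rw [mul_comm]
  refine Eq.subst (motive := (HasSum · _)) (funext fun p ↦ ?_) h
  rw [thetaTerm]
  ring

lemma integrableOn_thetaTerm (p : ℕ × ℕ) : IntegrableOn (thetaTerm p) (Ioi 0) :=
  (integrableOn_gauss_mul_gauss (by positivity) (by positivity)).const_mul 4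

lemma integral_thetaTerm (p : ℕ × ℕ) : ∫ t in Ioi (0 : ℝ), thetaTerm p t =
    4 * (Real.exp (-(2 * π * (p.2 + 1 / 2) * (p.1 + 1 / 2))) / (p.2 + 1 / 2)) := by
  simp only [thetaTerm]
  rw [integral_const_mul, integral_gauss_mul_gauss (by positivity) (by positivity)]

lemma thetaTerm_nonneg (p : ℕ × ℕ) (t : ℝ) : 0 ≤ thetaTerm p t := by
  unfold thetaTerm
  positivity

lemma summable_integral_thetaTerm : Summable fun p ↦ ∫ t in Ioi (0 : ℝ), thetaTerm p t := by
  have he := Real.summable_exp_neg_nat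
  refine Summable.of_nonneg_of_le (fun p ↦ integral_nonneg (thetaTerm_nonneg p)) (fun p ↦ ?_)
    ((he.mul_of_nonneg he (fun n ↦ (Real.exp_pos _).le) fun n ↦ (Real.exp_pos _).le).mul_left 8)
  have h1 : (0 : ℝ) ≤ p.1 := p.1.cast_nonneg
  have h2 : (0 : ℝ) ≤ p.2 := p.2.cast_nonneg
  have hpi := Real.pi_gt_three
  rw [integral_thetaTerm, ← Real.exp_add, mul_div_assoc', div_le_iff₀ (by positivity)]
  have hle : Real.exp (-(2 * π * (p.2 + 1 / 2) * (p.1 + 1 / 2))) ≤ Real.exp (-p.1 + -p.2) := by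
    refine Real.exp_le_exp.2 ?_
    nlinarith [mul_nonneg h1 h2, mul_nonneg (sub_nonneg.2 hpi.le) (mul_nonneg
      (by positivity : (0 : ℝ) ≤ p.2 + 1 / 2) (by positivity : (0 : ℝ) ≤ p.1 + 1 / 2))]
  nlinarith [mul_nonneg h2 (Real.exp_pos (-p.1 + -p.2)).le]

lemma hasSum_integral_thetaTerm : HasSum (fun p ↦ ∫ t in Ioi (0 : ℝ), thetaTerm p t)
    (∫ t in Ioi (0 : ℝ), thetaTwo t * thetaFour t) := by
  have h := hasSum_integral_of_summable_integral_norm integrableOn_thetaTerm (by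
    simpa only [Real.norm_of_nonneg (thetaTerm_nonneg _ _)] using summable_integral_thetaTerm)
  rwa [setIntegral_congr_fun measurableSet_Ioi fun t ht ↦ (hasSum_thetaTerm ht).tsum_eq] at h

lemma hasSum_log_integral : HasSum
    (fun n : ℕ ↦ 4 * (Real.log (1 + Real.exp (-π * (1 / 2)) ^ (2 * n + 1)) -
      Real.log (1 - Real.exp (-π * (1 / 2)) ^ (2 * n + 1))))
    (∫ t in Ioi (0 : ℝ), thetaTwo t * thetaFour t) := by
  refine hasSum_integral_thetaTerm.prod_fiberwise fun n ↦ ?_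
  have hq1 : Real.exp (-π * (1 / 2)) < 1 := Real.exp_lt_one_iff.2 (by nlinarith [Real.pi_pos])
  have hy : |Real.exp (-π * (1 / 2)) ^ (2 * n + 1)| < 1 := by
    rw [abs_of_pos (by positivity)]
    exact pow_lt_one₀ (Real.exp_pos _).le hq1 (by positivity)
  refine Eq.subst (motive := (HasSum · _)) (funext fun m ↦ ?_)
    ((Real.hasSum_log_sub_log_of_abs_lt_one hy).mul_left 4)
  rw [integral_thetaTerm, ← pow_mul, ← Real.exp_nat_mul]
  have e : ((2 * n + 1) * (2 * m + 1) : ℕ) * (-π * (1 / 2)) =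
      -(2 * π * (m + 1 / 2) * (n + 1 / 2)) := by
    push_cast
    ring
  rw [e]
  field_simp

end ThetaIntegral

theorem stmt_6 :
    ∫ k in (0:ℝ)..(1:ℝ), 1 / (k ^ ((1:ℝ)/2) * (1 - k^2) ^ ((3:ℝ)/4) * EllK k)
      = 2 * Real.log (1 + Real.sqrt 2) := by
  rw [integral_eq_integral_thetaTwo_mul_thetaFour]
  have hq1 : Real.exp (-π * (1 / 2)) < 1 := Real.exp_lt_one_iff.2 (by nlinarith [Real.pi_pos])
  have hlim := tendsto_prod_div_prod (t := 1 / 2) (by norm_num)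
  rw [thetaThree_half_eq, mul_div_assoc, div_self (thetaFour_pos (by norm_num)).ne',
    mul_one] at hlim
  refine tendsto_nhds_unique hasSum_log_integral.tendsto_sum_nat
    (((hlim.log (by positivity)).const_mul 2).congr fun N ↦ ?_)
  rw [← Finset.prod_div_distrib, Real.log_prod fun j _ ↦ ?_, Finset.mul_sum]
  · refine Finset.sum_congr rfl fun j _ ↦ ?_
    have hy : Real.exp (-π * (1 / 2)) ^ (2 * j + 1) < 1 :=
      pow_lt_one₀ (Real.exp_pos _).le hq1 (by positivity)
    rw [Real.log_div (by positivity) (pow_ne_zero _ (sub_pos.2 hy).ne'), Real.log_pow,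
      Real.log_pow]
    push_cast
    ring
  · have hy : Real.exp (-π * (1 / 2)) ^ (2 * j + 1) < 1 :=
      pow_lt_one₀ (Real.exp_pos _).le hq1 (by positivity)
    have := sub_pos.2 hy
    positivity
end
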